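/- arXiv:2507.04728 — 2 statements merged into one kernel-verified Lean document; each statement's English description precedes it below -/
import Mathlib

section
/- Let G~ be a mixed graph whose underlying graph G has no pendant vertices and no isolated vertices, with κ(G) = c(G) − 1 and c(G) ≥ 2. If r(G~) = 2m(G) − 2κ(G) + s for some s ∈ {0,1}, then either G has a perfect matching or G has a connected component that is an odd cycle. -/
open scoped Classical

namespace MixedPaper

universe u

/-- A mixed graph: a finite simple graph together with an orientation of a subset
of its edges.  `arc u v = true` means there is an arc from `u` to `v`. -/
structure MixedGraph (V : Type u) where
  graph : SimpleGraph V
  arc : V → V → Bool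
  arc_adj : ∀ u v, arc u v → graph.Adj u v
  arc_antisymm : ∀ u v, arc u v → ¬ arc v u

variable {V : Type u}

/-- The Hermitian adjacency matrix of a mixed graph. -/
noncomputable def MixedGraph.hMatrix [Fintype V] [DecidableEq V] (M : MixedGraph V) :
    Matrix V V ℂ := fun u v =>
  if M.arc u v then Complex.I
  else if M.arc v u then -Complex.I
  else if M.graph.Adj u v then 1 else 0

/-- The H-rank of a mixed graph: the rank of its Hermitian adjacency matrix. -/
noncomputable def MixedGraph.hRank [Fintype V] [DecidableEq V] (M : MixedGraph V) : ℕ :=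
  M.hMatrix.rank

/-- The matching number of a simple graph. -/
noncomputable def matchingNumber (G : SimpleGraph V) : ℕ :=
  sSup {k | ∃ N : G.Subgraph, N.IsMatching ∧ N.edgeSet.ncard = k}

/-- A subgraph is a cycle subgraph if it is connected and every one of its vertices
has exactly two neighbours in it. -/
def IsCycleSubgraph {G : SimpleGraph V} (C : G.Subgraph) : Prop :=
  C.Connected ∧ ∀ v ∈ C.verts, {w | C.Adj v w}.ncard = 2

/-- κ(G) : the number of even cycles of G. -/
noncomputable def evenCycleCount (G : SimpleGraph V) : ℕ :=
  {C : G.Subgraph | IsCycleSubgraph C ∧ Even C.verts.ncard}.ncard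

/-- c(G) = |E(G)| - |V(G)| + ω(G), the cyclomatic number. -/
noncomputable def cyclomatic [Fintype V] (G : SimpleGraph V) : ℤ :=
  (G.edgeSet.ncard : ℤ) - (Fintype.card V : ℤ) + (Nat.card G.ConnectedComponent : ℤ)

/-- The induced mixed subgraph on a set of vertices. -/
def MixedGraph.induce (M : MixedGraph V) (S : Set V) : MixedGraph S where
  graph := M.graph.induce S
  arc := fun a b => M.arc a.1 b.1
  arc_adj := fun a b h => M.arc_adj a.1 b.1 h
  arc_antisymm := fun a b h => M.arc_antisymm a.1 b.1 h

/-- The mixed subgraph induced by a connected component of the underlying graph. -/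
def MixedGraph.comp (M : MixedGraph V) (c : M.graph.ConnectedComponent) :
    MixedGraph c.supp := M.induce c.supp

/-- The signature |f - b| of a closed walk in a mixed graph: the absolute difference
between the numbers of forward and backward arcs along the walk. -/
def walkSignature (M : MixedGraph V) {u : V} (w : M.graph.Walk u u) : ℕ :=
  ((w.darts.countP fun d => M.arc d.toProd.1 d.toProd.2 : ℤ) -
    (w.darts.countP fun d => M.arc d.toProd.2 d.toProd.1 : ℤ)).natAbs

/-- The signature of the cycle subgraph `C` of the mixed graph `M` satisfies the
predicate `P` (expressed via a closed walk traversing `C`; the signature does not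
depend on the choice of traversal). -/
def CycleSig (M : MixedGraph V) (C : M.graph.Subgraph) (P : ℕ → Prop) : Prop :=
  ∃ (u : V) (w : M.graph.Walk u u), w.IsCycle ∧
    {v | v ∈ w.support} = C.verts ∧ {e | e ∈ w.edges} = C.edgeSet ∧
    P (walkSignature M w)

/-- `C` is a pendant cycle with unique vertex `x` of degree 3. -/
def IsPendantCycle (G : SimpleGraph V) (C : G.Subgraph) (x : V) : Prop :=
  IsCycleSubgraph C ∧ x ∈ C.verts ∧ {w | G.Adj x w}.ncard = 3 ∧
    ∀ v ∈ C.verts, v ≠ x → {w | G.Adj v w}.ncard = 2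

/-- G has no pendant vertices (vertices of degree 1). -/
def NoPendantVerts (G : SimpleGraph V) : Prop := ∀ u : V, {w | G.Adj u w}.ncard ≠ 1

/-- The (distinct) cycles of G are pairwise vertex-disjoint. -/
def CyclesVertexDisjoint (G : SimpleGraph V) : Prop :=
  ∀ C₁ C₂ : G.Subgraph, IsCycleSubgraph C₁ → IsCycleSubgraph C₂ → C₁ ≠ C₂ →
    Disjoint C₁.verts C₂.verts

/-- The (distinct) even cycles of G are pairwise vertex-disjoint. -/
def EvenCyclesVertexDisjoint (G : SimpleGraph V) : Prop :=
  ∀ C₁ C₂ : G.Subgraph, IsCycleSubgraph C₁ → IsCycleSubgraph C₂ →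
    Even C₁.verts.ncard → Even C₂.verts.ncard → C₁ ≠ C₂ →
    Disjoint C₁.verts C₂.verts

/-- One pendant `K₂` deletion step, recorded on the surviving vertex sets:
`u` is pendant in the graph induced on `S` with unique neighbour `v` there,
and both are deleted. -/
def PendantStep (G : SimpleGraph V) (S T : Set V) : Prop :=
  ∃ u v, u ∈ S ∧ v ∈ S ∧ {w | w ∈ S ∧ G.Adj u w} = {v} ∧ T = S \ {u, v}

/-- `S` is reachable from the full vertex set by a sequence of pendant K₂ deletions. -/
def PendantReaches (G : SimpleGraph V) (S : Set V) : Prop :=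
  Relation.ReflTransGen (PendantStep G) Set.univ S

/-- The graph induced on `S` has no pendant vertices. -/
def NoPendantIn (G : SimpleGraph V) (S : Set V) : Prop :=
  ∀ u ∈ S, {w | w ∈ S ∧ G.Adj u w}.ncard ≠ 1

/-- `u` lies on some even cycle of `G`. -/
def OnEvenCycle (G : SimpleGraph V) (u : V) : Prop :=
  ∃ C : G.Subgraph, IsCycleSubgraph C ∧ Even C.verts.ncard ∧ u ∈ C.verts

/-- G is the graph ∞(p,1,q): two cycles of lengths p and q sharing exactly one vertex. -/
def IsInfinityGraph (G : SimpleGraph V) (p q : ℕ) : Prop :=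
  ∃ C₁ C₂ : G.Subgraph, IsCycleSubgraph C₁ ∧ IsCycleSubgraph C₂ ∧
    C₁.verts.ncard = p ∧ C₂.verts.ncard = q ∧
    (C₁.verts ∩ C₂.verts).ncard = 1 ∧ C₁ ⊔ C₂ = ⊤

/-- G is the theta graph θ(p,l,q): three internally disjoint paths with p, l, q
vertices respectively, joining two common endvertices. -/
def IsThetaGraph (G : SimpleGraph V) (p l q : ℕ) : Prop :=
  2 ≤ p ∧ 2 ≤ l ∧ 2 ≤ q ∧ ¬(p = 2 ∧ l = 2) ∧ ¬(p = 2 ∧ q = 2) ∧ ¬(l = 2 ∧ q = 2) ∧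
  ∃ (a b : V) (W₁ W₂ W₃ : G.Walk a b), W₁.IsPath ∧ W₂.IsPath ∧ W₃.IsPath ∧
    W₁.length = p - 1 ∧ W₂.length = l - 1 ∧ W₃.length = q - 1 ∧
    (∀ v : V, v ∈ W₁.support ∨ v ∈ W₂.support ∨ v ∈ W₃.support) ∧
    (∀ e ∈ G.edgeSet, e ∈ W₁.edges ∨ e ∈ W₂.edges ∨ e ∈ W₃.edges) ∧
    {v | v ∈ W₁.support ∧ v ∈ W₂.support} = {a, b} ∧
    {v | v ∈ W₁.support ∧ v ∈ W₃.support} = {a, b} ∧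
    {v | v ∈ W₂.support ∧ v ∈ W₃.support} = {a, b}

/-- Every odd cycle of `M` has signature satisfying `P`. -/
def OddCyclesSig (M : MixedGraph V) (P : ℕ → Prop) : Prop :=
  ∀ C : M.graph.Subgraph, IsCycleSubgraph C → Odd C.verts.ncard → CycleSig M C P

/-- Every even cycle of `M`, of length `n`, has signature `s` satisfying `P n s`. -/
def EvenCyclesSig (M : MixedGraph V) (P : ℕ → ℕ → Prop) : Prop :=
  ∀ C : M.graph.Subgraph, IsCycleSubgraph C → Even C.verts.ncard →
    CycleSig M C (P C.verts.ncard)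

/-- The whole mixed graph is a single cycle. -/
def IsCycleMG (M : MixedGraph V) : Prop := IsCycleSubgraph (⊤ : M.graph.Subgraph)

/-- The family 𝔊₀. -/
def MemG0 [Fintype V] [DecidableEq V] (M : MixedGraph V) : Prop :=
  M.graph.Connected ∧ 1 ≤ cyclomatic M.graph ∧ CyclesVertexDisjoint M.graph ∧
  NoPendantVerts M.graph ∧
  ∃ (C : M.graph.Subgraph) (x : V), IsPendantCycle M.graph C x ∧ Odd C.verts.ncard ∧
    CycleSig M C Odd ∧
    ((M.induce (C.vertsᶜ ∪ {x})).hRank : ℤ) =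
      2 * (matchingNumber (M.induce (C.vertsᶜ ∪ {x})).graph : ℤ) -
        2 * cyclomatic (M.induce (C.vertsᶜ ∪ {x})).graph

/-- The family 𝔛₁ : mixed ∞(p,1,q)-graphs, p even, q odd, whose odd cycle has odd
signature and whose even cycle C̃_p satisfies σ ≡ p (mod 4). -/
def MemX1 (M : MixedGraph V) : Prop :=
  ∃ p q : ℕ, Even p ∧ Odd q ∧ IsInfinityGraph M.graph p q ∧
    OddCyclesSig M Odd ∧ EvenCyclesSig M (fun n s => s % 4 = n % 4)

/-- The family 𝔛₂ : mixed θ(p,l,q)-graphs, p even, l q odd, whose two odd cycles have odd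
signatures and whose even cycle C̃_{q+l-2} satisfies q + l + σ ≡ 2 (mod 4). -/
def MemX2 (M : MixedGraph V) : Prop :=
  ∃ p l q : ℕ, Even p ∧ Odd l ∧ Odd q ∧ IsThetaGraph M.graph p l q ∧
    OddCyclesSig M Odd ∧ EvenCyclesSig M (fun _ s => (q + l + s) % 4 = 2)

/-- The family 𝔊₂ = 𝔊₀ ∪ 𝔛₁ ∪ 𝔛₂ together with the mixed odd cycles of odd signature. -/
def MemG2 [Fintype V] [DecidableEq V] (M : MixedGraph V) : Prop :=
  MemG0 M ∨ MemX1 M ∨ MemX2 M ∨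
    (IsCycleMG M ∧ Odd (Nat.card V) ∧ CycleSig M ⊤ Odd)

/-- The family 𝔜₁. -/
def MemY1 (M : MixedGraph V) : Prop :=
  ∃ p q : ℕ, Even p ∧ Odd q ∧ IsInfinityGraph M.graph p q ∧
    OddCyclesSig M Even ∧ EvenCyclesSig M (fun n s => s % 4 = n % 4)

/-- The family 𝔜₂. -/
def MemY2 (M : MixedGraph V) : Prop :=
  ∃ p l q : ℕ, Even p ∧ Odd l ∧ Odd q ∧ IsThetaGraph M.graph p l q ∧
    OddCyclesSig M Even ∧ EvenCyclesSig M (fun _ s => (q + l + s) % 4 = 2)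

/-- `M` is a disjoint union of `k` even cycles and one odd cycle with even signature. -/
def IsDisjointUnionEvenCyclesOddCycleEvenSig (M : MixedGraph V) (k : ℤ) : Prop :=
  (∀ c : M.graph.ConnectedComponent, IsCycleMG (M.comp c)) ∧
  (({c : M.graph.ConnectedComponent | Even (Nat.card c.supp)}.ncard : ℤ) = k) ∧
  (∃! c : M.graph.ConnectedComponent, Odd (Nat.card c.supp)) ∧
  (∀ c : M.graph.ConnectedComponent, Odd (Nat.card c.supp) →
    CycleSig (M.comp c) ⊤ Even)

/-- The family 𝔉₀. -/
def MemF0 [Fintype V] [DecidableEq V] (M : MixedGraph V) : Prop :=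
  M.graph.Connected ∧ 2 ≤ cyclomatic M.graph ∧ CyclesVertexDisjoint M.graph ∧
  NoPendantVerts M.graph ∧
  (∃ (C₀ : M.graph.Subgraph) (x₀ : V), IsPendantCycle M.graph C₀ x₀ ∧ Odd C₀.verts.ncard ∧
    CycleSig M C₀ Even ∧
    ∀ C : M.graph.Subgraph, IsCycleSubgraph C → C ≠ C₀ →
      Even C.verts.ncard ∧ CycleSig M C (fun s => s % 4 = C.verts.ncard % 4)) ∧
  (∃ (Cq : M.graph.Subgraph) (x : V), IsPendantCycle M.graph Cq x ∧ Even Cq.verts.ncard ∧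
    ∃ S : Set ↥(Cq.vertsᶜ ∪ {x}),
      PendantReaches (M.induce (Cq.vertsᶜ ∪ {x})).graph S ∧
      NoPendantIn (M.induce (Cq.vertsᶜ ∪ {x})).graph S ∧
      IsDisjointUnionEvenCyclesOddCycleEvenSig
        ((M.induce (Cq.vertsᶜ ∪ {x})).induce S)
        (cyclomatic (M.induce (Cq.vertsᶜ ∪ {x})).graph))

/-- The family 𝔉₂ = 𝔉₀ ∪ 𝔜₁ ∪ 𝔜₂ together with the mixed odd cycles of even signature. -/
def MemF2 [Fintype V] [DecidableEq V] (M : MixedGraph V) : Prop :=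
  MemF0 M ∨ MemY1 M ∨ MemY2 M ∨
    (IsCycleMG M ∧ Odd (Nat.card V) ∧ CycleSig M ⊤ Even)

/-- A connected component that is either an even cycle C̃_q with σ ≡ q (mod 4),
or an isolated vertex. -/
def GoodOtherComp (M : MixedGraph V) : Prop :=
  (IsCycleMG M ∧ Even (Nat.card V) ∧
    CycleSig M ⊤ (fun s => s % 4 = (Nat.card V) % 4)) ∨
  Nat.card V = 1

/-- A fractional matching of `G`, given as a weight function on `Sym2 V` vanishing
outside the edge set. -/
def IsFracMatching [Fintype V] [DecidableEq V] (G : SimpleGraph V) (f : Sym2 V → ℝ) : Prop :=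
  (∀ e ∈ G.edgeSet, 0 ≤ f e ∧ f e ≤ 1) ∧ (∀ e, e ∉ G.edgeSet → f e = 0) ∧
    ∀ v : V, ∑ e ∈ Finset.univ.filter (fun e : Sym2 V => v ∈ e), f e ≤ 1

/-- The fractional matching number m*(G). -/
noncomputable def fracMatchingNumber [Fintype V] [DecidableEq V] (G : SimpleGraph V) : ℝ :=
  sSup {x : ℝ | ∃ f : Sym2 V → ℝ, IsFracMatching G f ∧ ∑ e : Sym2 V, f e = x}

/-- Membership in the family ℱ : fractional matchings of total weight m*(G) taking
values in {0, 1/2, 1}. -/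
def InOptFamily [Fintype V] [DecidableEq V] (G : SimpleGraph V) (f : Sym2 V → ℝ) : Prop :=
  IsFracMatching G f ∧ (∑ e : Sym2 V, f e) = fracMatchingNumber G ∧
    ∀ e : Sym2 V, f e = 0 ∨ f e = 1 / 2 ∨ f e = 1

/-- An optimal fractional matching: a member of ℱ with the largest number of
edges of weight 1. -/
def IsOptFracMatching [Fintype V] [DecidableEq V] (G : SimpleGraph V) (f : Sym2 V → ℝ) : Prop :=
  InOptFamily G f ∧
    ∀ g : Sym2 V → ℝ, InOptFamily G g →
      {e : Sym2 V | g e = 1}.ncard ≤ {e : Sym2 V | f e = 1}.ncard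

/-- E₁(C) : the edges of `G` with exactly one endpoint on the cycle `C`. -/
def cutEdges (G : SimpleGraph V) (C : G.Subgraph) : Set (Sym2 V) :=
  {e | e ∈ G.edgeSet ∧ ∃ a b : V, e = s(a, b) ∧ a ∈ C.verts ∧ b ∉ C.verts}


/-! ### Cyclomatic number under edge deletion -/

lemma handshake {V : Type u} [Fintype V] (K : SimpleGraph V) :
    ∑ v, {w | K.Adj v w}.ncard = 2 * K.edgeSet.ncard := by
  have h := K.sum_degrees_eq_twice_card_edges
  rw [Set.ncard_eq_toFinset_card', ← SimpleGraph.edgeFinset, ← h]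
  refine Finset.sum_congr rfl fun v _ => ?_
  rw [← SimpleGraph.card_neighborSet_eq_degree, ← Nat.card_eq_fintype_card]
  rfl

lemma reach_delete {V : Type u} (G : SimpleGraph V) (a b : V) {x y : V} (h : G.Reachable x y) :
    (G.deleteEdges {s(a, b)}).Reachable x y ∨
    ((G.deleteEdges {s(a, b)}).Reachable x a ∧ (G.deleteEdges {s(a, b)}).Reachable b y) ∨
    ((G.deleteEdges {s(a, b)}).Reachable x b ∧ (G.deleteEdges {s(a, b)}).Reachable a y) := by
  obtain ⟨w⟩ := h
  induction w with
  | nil => exact Or.inl (SimpleGraph.Reachable.refl _)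
  | @cons u v z huv p ih =>
    by_cases he : s(u, v) = s(a, b)
    · rw [Sym2.eq_iff] at he
      rcases he with ⟨rfl, rfl⟩ | ⟨rfl, rfl⟩
      · rcases ih with h | ⟨h1, h2⟩ | ⟨h1, h2⟩
        · exact Or.inr (Or.inl ⟨SimpleGraph.Reachable.refl _, h⟩)
        · exact Or.inr (Or.inl ⟨SimpleGraph.Reachable.refl _, h2⟩)
        · exact Or.inl h2
      · rcases ih with h | ⟨h1, h2⟩ | ⟨h1, h2⟩
        · exact Or.inr (Or.inr ⟨SimpleGraph.Reachable.refl _, h⟩)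
        · exact Or.inl h2
        · exact Or.inr (Or.inr ⟨SimpleGraph.Reachable.refl _, h2⟩)
    · have hadj : (G.deleteEdges {s(a, b)}).Adj u v := by
        rw [SimpleGraph.deleteEdges_adj]; exact ⟨huv, by simpa using he⟩
      have hr := hadj.reachable
      rcases ih with h | ⟨h1, h2⟩ | ⟨h1, h2⟩
      · exact Or.inl (hr.trans h)
      · exact Or.inr (Or.inl ⟨hr.trans h1, h2⟩)
      · exact Or.inr (Or.inr ⟨hr.trans h1, h2⟩)

lemma ncard_delete {V : Type u} [Fintype V] (G : SimpleGraph V) {a b : V} (h : G.Adj a b) :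
    (G.deleteEdges {s(a, b)}).edgeSet.ncard + 1 = G.edgeSet.ncard := by
  rw [SimpleGraph.edgeSet_deleteEdges]
  exact Set.ncard_sdiff_singleton_add_one (by simpa using h) (Set.toFinite _)

lemma cyc_delete_le {V : Type u} [Fintype V] (G : SimpleGraph V) {a b : V} (h : G.Adj a b) :
    cyclomatic (G.deleteEdges {s(a, b)}) ≤ cyclomatic G := by
  have h1 := ncard_delete G h
  have h2 : Nat.card (G.deleteEdges {s(a, b)}).ConnectedComponent
      ≤ Nat.card (Option G.ConnectedComponent) := by
    let f : (G.deleteEdges {s(a, b)}).ConnectedComponent → Option G.ConnectedComponent :=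
      fun c => if c = (G.deleteEdges {s(a, b)}).connectedComponentMk a then none
        else some (c.map (SimpleGraph.Hom.ofLE (SimpleGraph.deleteEdges_le _)))
    refine Nat.card_le_card_of_injective f ?_
    intro c d hcd
    induction c using SimpleGraph.ConnectedComponent.ind with | _ x
    induction d using SimpleGraph.ConnectedComponent.ind with | _ y
    simp only [f] at hcd
    split_ifs at hcd with hx hy hy
    · rw [hx, hy]
    · simp only [SimpleGraph.ConnectedComponent.map_mk, Option.some.injEq,
        SimpleGraph.ConnectedComponent.eq] at hcd hx hy ⊢
      rcases reach_delete G a b hcd with h | ⟨h1, h2⟩ | ⟨h1, h2⟩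
      · exact h
      · exact absurd h1 hx
      · exact absurd h2.symm hy
  rw [Finite.card_option] at h2
  unfold cyclomatic
  omega

lemma cyc_delete_nonbridge {V : Type u} [Fintype V] (G : SimpleGraph V) {a b : V}
    (h : G.Adj a b) (hr : (G.deleteEdges {s(a, b)}).Reachable a b) :
    cyclomatic (G.deleteEdges {s(a, b)}) + 1 ≤ cyclomatic G := by
  have h1 := ncard_delete G h
  have h2 : Nat.card (G.deleteEdges {s(a, b)}).ConnectedComponent
      ≤ Nat.card G.ConnectedComponent := by
    let f : (G.deleteEdges {s(a, b)}).ConnectedComponent → G.ConnectedComponent :=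
      fun c => c.map (SimpleGraph.Hom.ofLE (SimpleGraph.deleteEdges_le _))
    refine Nat.card_le_card_of_injective f ?_
    intro c d hcd
    induction c using SimpleGraph.ConnectedComponent.ind with | _ x
    induction d using SimpleGraph.ConnectedComponent.ind with | _ y
    simp only [f, SimpleGraph.ConnectedComponent.map_mk,
        SimpleGraph.ConnectedComponent.eq] at hcd ⊢
    rcases reach_delete G a b hcd with h | ⟨h1, h2⟩ | ⟨h1, h2⟩
    · exact h
    · exact h1.trans (hr.trans h2)
    · exact h1.trans (hr.symm.trans h2)
  unfold cyclomatic
  omega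

lemma cyc_mono {V : Type u} [Fintype V] (F : SimpleGraph V) :
    ∀ (n : ℕ) (G : SimpleGraph V), G.edgeSet.ncard = n → F ≤ G →
      cyclomatic F ≤ cyclomatic G := by
  intro n
  induction n with
  | zero =>
    intro G hn hle
    have : G = ⊥ := by
      rw [Set.ncard_eq_zero (Set.toFinite _)] at hn
      simpa using hn
    subst this
    rw [le_bot_iff.mp hle]
  | succ n ih =>
    intro G hn hle
    by_cases hFG : F = G
    · rw [hFG]
    · have : ∃ a b, G.Adj a b ∧ ¬ F.Adj a b := by
        by_contra hcon
        push Not at hcon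
        exact hFG (le_antisymm hle (fun a b hab => hcon a b hab))
      obtain ⟨a, b, hab, hF⟩ := this
      have h1 := ncard_delete G hab
      refine (ih (G.deleteEdges {s(a, b)}) (by omega) ?_).trans (cyc_delete_le G hab)
      intro x y hxy
      rw [SimpleGraph.deleteEdges_adj]
      refine ⟨hle hxy, ?_⟩
      intro he
      simp only [Set.mem_singleton_iff, Sym2.eq_iff] at he
      rcases he with ⟨rfl, rfl⟩ | ⟨rfl, rfl⟩
      · exact hF hxy
      · exact hF hxy.symm

lemma cyc_family {V : Type u} [Fintype V] {ι : Type*} (F : SimpleGraph V)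
    (K : ι → SimpleGraph V) (s : Finset ι) :
    ∀ G : SimpleGraph V, F ≤ G → (∀ i ∈ s, K i ≤ G) →
      (∀ i ∈ s, ∀ a b, (K i).Adj a b → ¬ F.Adj a b) →
      (∀ i ∈ s, ∀ j ∈ s, i ≠ j → ∀ a b, (K i).Adj a b → ¬ (K j).Adj a b) →
      (∀ i ∈ s, ∃ a b, (K i).Adj a b ∧ ((K i).deleteEdges {s(a, b)}).Reachable a b) →
      cyclomatic F + s.card ≤ cyclomatic G := by
  induction s using Finset.induction_on with
  | empty =>
    intro G hle _ _ _ _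
    simpa using cyc_mono F _ G rfl hle
  | insert i s hi ih =>
    intro G hle hK hKF hdis hbr
    obtain ⟨a, b, hab, hr⟩ := hbr i (Finset.mem_insert_self _ _)
    have hiG := hK i (Finset.mem_insert_self _ _)
    have key : ∀ L : SimpleGraph V, L ≤ G → (¬ L.Adj a b) → L ≤ G.deleteEdges {s(a, b)} := by
      intro L hL hn x y hxy
      rw [SimpleGraph.deleteEdges_adj]
      refine ⟨hL hxy, ?_⟩
      intro he
      simp only [Set.mem_singleton_iff, Sym2.eq_iff] at he
      rcases he with ⟨rfl, rfl⟩ | ⟨rfl, rfl⟩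
      · exact hn hxy
      · exact hn hxy.symm
    have h1 := ih (G.deleteEdges {s(a, b)})
      (key F hle (hKF i (Finset.mem_insert_self _ _) a b hab))
      (fun j hj => key _ (hK j (Finset.mem_insert_of_mem hj))
        (hdis i (Finset.mem_insert_self _ _) j (Finset.mem_insert_of_mem hj)
          (fun h => hi (h ▸ hj)) a b hab))
      (fun j hj => hKF j (Finset.mem_insert_of_mem hj))
      (fun j hj k hk => hdis j (Finset.mem_insert_of_mem hj) k (Finset.mem_insert_of_mem hk))
      (fun j hj => hbr j (Finset.mem_insert_of_mem hj))
    have h2 := cyc_delete_nonbridge G (hiG hab)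
      (hr.mono (SimpleGraph.deleteEdges_mono hiG))
    rw [Finset.card_insert_of_notMem hi]
    push_cast
    omega

/-- A cycle subgraph contains an edge that is not a bridge of it. -/
lemma cycle_nonbridge {V : Type u} [Fintype V] {G : SimpleGraph V} (C : G.Subgraph)
    (hC : IsCycleSubgraph C) :
    ∃ a b, C.spanningCoe.Adj a b ∧ (C.spanningCoe.deleteEdges {s(a, b)}).Reachable a b := by
  by_contra hcon
  push Not at hcon
  have hac : C.spanningCoe.IsAcyclic := by
    rw [SimpleGraph.isAcyclic_iff_forall_isBridge]
    intro e he
    induction e with | _ a b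
    rw [SimpleGraph.isBridge_iff]
    exact hcon a b he
  have hac' : C.coe.IsAcyclic := hac.comap C.coeEmbeddingSpanningCoe.toHom
    C.coeEmbeddingSpanningCoe.injective
  have htree : C.coe.IsTree := ⟨hC.1.coe, hac'⟩
  have hcard := htree.card_edgeFinset
  have hs := handshake C.coe
  have hdeg : ∀ v : C.verts, {w | C.coe.Adj v w}.ncard = 2 := by
    intro v
    rw [← hC.2 v.1 v.2, ← Set.ncard_image_of_injective _ Subtype.val_injective]
    congr 1
    ext w
    simp only [Set.mem_image, Set.mem_ofPred_eq, SimpleGraph.Subgraph.coe_adj, Subtype.exists,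
      exists_and_right, exists_eq_right]
    exact ⟨fun ⟨_, h⟩ => h, fun h => ⟨h.snd_mem, h⟩⟩
  simp only [hdeg, Finset.sum_const, Finset.card_univ, smul_eq_mul] at hs
  rw [Set.ncard_eq_toFinset_card', ← SimpleGraph.edgeFinset] at hs
  omega

/-! ### Matchings as involutions -/

/-- A matching of `G` encoded as an involution of the vertex set. -/
structure IsMInv {V : Type u} (G : SimpleGraph V) (σ : Equiv.Perm V) : Prop where
  inv : ∀ v, σ (σ v) = v
  adj : ∀ v, σ v ≠ v → G.Adj v (σ v)

lemma matching_card {V : Type u} [Fintype V] {G : SimpleGraph V} (N : G.Subgraph)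
    (hN : N.IsMatching) : 2 * N.edgeSet.ncard = N.verts.ncard := by
  have h := handshake N.spanningCoe
  rw [SimpleGraph.Subgraph.edgeSet_spanningCoe] at h
  rw [← h, Set.ncard_eq_toFinset_card', Finset.card_eq_sum_ones,
    ← Finset.sum_subset (Finset.subset_univ N.verts.toFinset)]
  · refine Finset.sum_congr rfl fun v hv => ?_
    obtain ⟨w, hw, huniq⟩ := hN (by simpa using hv)
    rw [Set.ncard_eq_one]
    refine ⟨w, ?_⟩
    ext z
    simp only [SimpleGraph.Subgraph.spanningCoe_adj, Set.mem_ofPred_eq, Set.mem_singleton_iff]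
    exact ⟨fun h => huniq z h, fun h => h ▸ hw⟩
  · intro v _ hv
    rw [Set.ncard_eq_zero (Set.toFinite _)]
    ext z
    simp only [SimpleGraph.Subgraph.spanningCoe_adj, Set.mem_ofPred_eq, Set.mem_empty_iff_false,
      iff_false]
    intro h
    exact hv (by simpa using h.fst_mem)

lemma exists_matching_of_inv {V : Type u} {G : SimpleGraph V}
    {σ : Equiv.Perm V} (hσ : IsMInv G σ) :
    ∃ N : G.Subgraph, N.IsMatching ∧ N.verts = {v | σ v ≠ v} := by
  refine ⟨{ verts := {v | σ v ≠ v}, Adj := fun a b => σ a ≠ a ∧ σ a = b, adj_sub := ?_,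
            edge_vert := ?_, symm := ?_ }, ?_, rfl⟩
  · rintro a b ⟨h, rfl⟩
    exact hσ.adj a h
  · rintro a b ⟨h, -⟩
    exact h
  · constructor
    rintro a b ⟨h, rfl⟩
    refine ⟨?_, hσ.inv a⟩
    rw [hσ.inv]
    exact h.symm
  · intro v hv
    exact ⟨σ v, ⟨hv, rfl⟩, fun y hy => hy.2.symm⟩

lemma exists_inv_of_matching {V : Type u} {G : SimpleGraph V} (N : G.Subgraph)
    (hN : N.IsMatching) : ∃ σ : Equiv.Perm V, IsMInv G σ ∧ N.verts = {v | σ v ≠ v} := by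
  have hN' : ∀ v : V, ∃ w, v ∈ N.verts → N.Adj v w ∧ ∀ z, N.Adj v z → z = w := by
    intro v
    by_cases hv : v ∈ N.verts
    · obtain ⟨w, hw, hw2⟩ := hN hv
      exact ⟨w, fun _ => ⟨hw, hw2⟩⟩
    · exact ⟨v, fun h => absurd h hv⟩
  choose f hf' using hN'
  have hf : ∀ {v}, v ∈ N.verts → N.Adj v (f v) := fun h => (hf' _ h).1
  have hu : ∀ {v}, v ∈ N.verts → ∀ z, N.Adj v z → z = f v := fun h => (hf' _ h).2
  let g : V → V := fun v => if v ∈ N.verts then f v else v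
  have hg : Function.Involutive g := by
    intro v
    by_cases hv : v ∈ N.verts
    · have h1 : f v ∈ N.verts := (hf hv).snd_mem
      simp only [g, hv, h1, if_true]
      exact (hu h1 v (hf hv).symm).symm
    · simp [g, hv]
  refine ⟨hg.toPerm g, ⟨hg, ?_⟩, ?_⟩
  · intro v hv
    by_cases h : v ∈ N.verts
    · have : g v = f v := by simp [g, h]
      change G.Adj v (g v)
      rw [this]
      exact (hf h).adj_sub
    · exact absurd (by simp [g, h]) hv
  · ext v
    by_cases h : v ∈ N.verts
    · have h2 : g v = f v := by simp [g, h]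
      simp only [h, Function.Involutive.coe_toPerm, Set.mem_ofPred_eq, true_iff, h2]
      exact (hf h).adj_sub.ne'
    · simp [g, h]

lemma ncard_moved {V : Type u} [Fintype V] [DecidableEq V] (σ : Equiv.Perm V) :
    {v | σ v ≠ v}.ncard = σ.support.card := by
  rw [← Set.ncard_coe_finset]
  congr 1
  ext v
  simp

lemma bddAbove_matching {V : Type u} [Fintype V] (G : SimpleGraph V) :
    BddAbove {k | ∃ N : G.Subgraph, N.IsMatching ∧ N.edgeSet.ncard = k} := by
  refine ⟨Nat.card (Sym2 V), ?_⟩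
  rintro k ⟨N, -, rfl⟩
  exact Set.ncard_le_card _

lemma inv_le {V : Type u} [Fintype V] [DecidableEq V] {G : SimpleGraph V}
    {σ : Equiv.Perm V} (hσ : IsMInv G σ) : σ.support.card ≤ 2 * matchingNumber G := by
  obtain ⟨N, hN, hv⟩ := exists_matching_of_inv hσ
  have h1 := matching_card N hN
  rw [hv, ncard_moved] at h1
  have := le_csSup (bddAbove_matching G) ⟨N, hN, rfl⟩
  unfold matchingNumber
  omega

lemma exists_max_inv {V : Type u} [Fintype V] [DecidableEq V] (G : SimpleGraph V) :
    ∃ σ : Equiv.Perm V, IsMInv G σ ∧ σ.support.card = 2 * matchingNumber G := by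
  have hne : {k | ∃ N : G.Subgraph, N.IsMatching ∧ N.edgeSet.ncard = k}.Nonempty :=
    ⟨_, ⊥, by intro v hv; exact absurd hv (by simp), rfl⟩
  obtain ⟨N, hN, hk⟩ := Nat.sSup_mem hne (bddAbove_matching G)
  obtain ⟨σ, hσ, hv⟩ := exists_inv_of_matching N hN
  refine ⟨σ, hσ, ?_⟩
  rw [← ncard_moved, ← hv, ← matching_card N hN, hk]
  rfl

/-- The vertices missed by some maximum matching. -/
def Missed {V : Type u} [Fintype V] [DecidableEq V] (G : SimpleGraph V) (v : V) : Prop :=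
  ∃ σ : Equiv.Perm V, IsMInv G σ ∧ σ.support.card = 2 * matchingNumber G ∧ σ v = v

lemma exists_missed {V : Type u} [Fintype V] [DecidableEq V] (G : SimpleGraph V)
    (h : ¬ ∃ N : G.Subgraph, N.IsPerfectMatching) : ∃ v, Missed G v := by
  obtain ⟨σ, hσ, hc⟩ := exists_max_inv G
  by_contra hcon
  apply h
  obtain ⟨N, hN, hv⟩ := exists_matching_of_inv hσ
  refine ⟨N, hN, fun v => ?_⟩
  rw [hv]
  intro hfix
  exact hcon ⟨v, σ, hσ, hc, hfix⟩

lemma missed_step {V : Type u} [Fintype V] [DecidableEq V] (G : SimpleGraph V) {v y : V}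
    (hv : Missed G v) (hvy : G.Adj v y) : ∃ w, Missed G w ∧ w ≠ v ∧ G.Adj y w := by
  obtain ⟨σ, hσ, hc, hfix⟩ := hv
  have hne := hvy.ne
  by_cases hy : σ y = y
  · exfalso
    -- augment
    let g : V → V := fun x => if x = v then y else if x = y then v else σ x
    have hg : Function.Involutive g := by
      intro x
      have h1 := hσ.inv x
      simp only [g]
      grind
    have hI : IsMInv G (hg.toPerm g) := by
      refine ⟨hg, ?_⟩
      intro x hx
      have h2 := hσ.adj x
      have h3 := hvy.symm
      simp only [Function.Involutive.coe_toPerm, g] at hx ⊢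
      grind
    have hle := inv_le hI
    have hs : (hg.toPerm g).support = insert v σ.support ∪ {y} := by
      ext x
      simp only [Equiv.Perm.mem_support, Function.Involutive.coe_toPerm, g, Finset.mem_union,
        Finset.mem_insert, Finset.mem_singleton]
      grind
    have hlt : σ.support.card < (hg.toPerm g).support.card := by
      apply Finset.card_lt_card
      rw [hs, Finset.ssubset_iff]
      refine ⟨v, by simp [hfix], fun x hx => ?_⟩
      simp only [Finset.mem_insert, Finset.mem_union] at hx ⊢
      tauto
    omega
  · have hw := hσ.adj y hy
    have hyy := hσ.inv y
    have hwv : σ y ≠ v := by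
      intro h
      rw [h, hfix] at hyy
      exact hne hyy
    refine ⟨σ y, ?_, hwv, hw⟩
    let g : V → V := fun x => if x = v then y else if x = y then v else
      if x = σ y then σ y else σ x
    have hg : Function.Involutive g := by
      intro x
      have h1 := hσ.inv x
      simp only [g]
      grind
    have hI : IsMInv G (hg.toPerm g) := by
      refine ⟨hg, ?_⟩
      intro x hx
      have h2 := hσ.adj x
      have h3 := hvy.symm
      simp only [Function.Involutive.coe_toPerm, g] at hx ⊢
      grind
    refine ⟨_, hI, ?_, ?_⟩
    · rw [← hc]
      have hs : (hg.toPerm g).support = insert v (σ.support.erase (σ y)) := by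
        ext x
        have h1 := hσ.inv x
        simp only [Equiv.Perm.mem_support, Function.Involutive.coe_toPerm, g, Finset.mem_erase,
          Finset.mem_insert]
        grind
      have hm : σ y ∈ σ.support := by
        rw [Equiv.Perm.mem_support, hyy]
        exact fun h => hy h.symm
      rw [hs, Finset.card_insert_of_notMem (by simp [hfix]), Finset.card_erase_of_mem hm]
      have := Finset.card_pos.mpr ⟨_, hm⟩
      omega
    · simp only [Function.Involutive.coe_toPerm, g]
      grind

/-- Unmatching the vertices of `X`. -/
lemma restrict_inv {V : Type u} [Fintype V] [DecidableEq V] {G : SimpleGraph V}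
    {σ : Equiv.Perm V} (hσ : IsMInv G σ) (X : Finset V) :
    ∃ τ : Equiv.Perm V, IsMInv G τ ∧ (∀ x ∈ X, τ x = x) ∧
      σ.support.card ≤ τ.support.card + 2 * (X ∩ σ.support).card := by
  let g : V → V := fun x => if x ∈ X ∨ σ x ∈ X then x else σ x
  have hg : Function.Involutive g := by
    intro x
    have h1 := hσ.inv x
    simp only [g]
    grind
  refine ⟨hg.toPerm g, ⟨hg, ?_⟩, ?_, ?_⟩
  · intro x hx
    have h2 := hσ.adj x
    simp only [Function.Involutive.coe_toPerm, g] at hx ⊢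
    grind
  · intro x hx
    simp [g, hx]
  · have hsub : σ.support ⊆ (hg.toPerm g).support ∪
        ((X ∩ σ.support) ∪ (X ∩ σ.support).image σ) := by
      intro x hx
      have h1 := hσ.inv x
      simp only [Equiv.Perm.mem_support, Function.Involutive.coe_toPerm, g, Finset.mem_union,
        Finset.mem_inter, Finset.mem_image] at hx ⊢
      by_cases h2 : x ∈ X
      · exact Or.inr (Or.inl ⟨h2, hx⟩)
      · by_cases h3 : σ x ∈ X
        · exact Or.inr (Or.inr ⟨σ x, ⟨h3, by rw [h1]; exact hx.symm⟩, h1⟩)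
        · left
          simp [h2, h3, hx]
    have h1 := Finset.card_le_card hsub
    have h2 := Finset.card_union_le (hg.toPerm g).support
      ((X ∩ σ.support) ∪ (X ∩ σ.support).image σ)
    have h3 := Finset.card_union_le (X ∩ σ.support) ((X ∩ σ.support).image σ)
    have h4 := Finset.card_image_le (s := X ∩ σ.support) (f := σ)
    omega

/-! ### Components as subgraphs, and even cycles from two matchings -/

/-- The component of `x₀` in the spanning subgraph `K`, as a subgraph of `G`. -/
def compSub {V : Type u} {G K : SimpleGraph V} (h : K ≤ G) (x₀ : V) : G.Subgraph where
  verts := {y | K.Reachable x₀ y}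
  Adj a b := K.Reachable x₀ a ∧ K.Adj a b
  adj_sub := fun hab => h hab.2
  edge_vert := fun hab => hab.1
  symm := ⟨fun _ _ hab => ⟨hab.1.trans hab.2.reachable, hab.2.symm⟩⟩

lemma compSub_connected {V : Type u} {G K : SimpleGraph V} (h : K ≤ G) (x₀ : V) :
    (compSub h x₀).Connected := by
  have key : ∀ y (hy : K.Reachable x₀ y),
      (compSub h x₀).coe.Reachable ⟨x₀, SimpleGraph.Reachable.refl _⟩ ⟨y, hy⟩ := by
    intro y hy
    have hy' := hy
    rw [SimpleGraph.reachable_iff_reflTransGen] at hy'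
    induction hy' with
    | refl => exact SimpleGraph.Reachable.refl _
    | @tail b c hb hbc ih =>
      have hb' : K.Reachable x₀ b := (SimpleGraph.reachable_iff_reflTransGen _ _).mpr hb
      refine (ih hb').trans (SimpleGraph.Adj.reachable ?_)
      exact ⟨hb', hbc⟩
  refine ⟨?_⟩
  have : Nonempty (compSub h x₀).verts := ⟨⟨x₀, SimpleGraph.Reachable.refl _⟩⟩
  refine ⟨?_⟩
  rintro ⟨a, ha⟩ ⟨b, hb⟩
  exact (key a ha).symm.trans (key b hb)

lemma compSub_cycle {V : Type u} {G K : SimpleGraph V} (h : K ≤ G) (x₀ : V)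
    (hd : ∀ v, K.Reachable x₀ v → {w | K.Adj v w}.ncard = 2) :
    IsCycleSubgraph (compSub h x₀) := by
  refine ⟨compSub_connected h x₀, fun v hv => ?_⟩
  rw [← hd v hv]
  congr 1
  ext w
  exact ⟨fun hw => hw.2, fun hw => ⟨hv, hw⟩⟩

lemma even_cycle_of_two {V : Type u} [Fintype V] {G : SimpleGraph V} {σ τ : Equiv.Perm V}
    (hσ : IsMInv G σ) (hτ : IsMInv G τ) (hst : ∀ v, σ v = v ↔ τ v = v) (hne : σ ≠ τ) :
    ∃ C : G.Subgraph, IsCycleSubgraph C ∧ Even C.verts.ncard ∧ ∀ v ∈ C.verts, σ v ≠ v := by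
  obtain ⟨x₀, hx₀⟩ : ∃ x, σ x ≠ τ x := by
    by_contra hcon
    push Not at hcon
    exact hne (Equiv.ext hcon)
  have hmoved : ∀ a, σ a ≠ τ a → σ a ≠ a := by
    intro a ha h
    exact ha (h.trans ((hst a).mp h).symm)
  have hmoved' : ∀ a, σ a ≠ τ a → τ a ≠ a := fun a ha h => hmoved a ha ((hst a).mpr h)
  have hQσ : ∀ a, σ a ≠ τ a → σ (σ a) ≠ τ (σ a) := by
    intro a ha h
    rw [hσ.inv] at h
    apply ha
    rw [← hτ.inv (σ a), ← h]
  have hQτ : ∀ a, σ a ≠ τ a → σ (τ a) ≠ τ (τ a) := by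
    intro a ha h
    rw [hτ.inv] at h
    apply ha
    rw [← hσ.inv (τ a), h]
  let K : SimpleGraph V :=
    { Adj := fun a b => σ a ≠ τ a ∧ (b = σ a ∨ b = τ a)
      symm := ⟨by
        rintro a b ⟨h, rfl | rfl⟩
        · exact ⟨hQσ a h, Or.inl (hσ.inv a).symm⟩
        · exact ⟨hQτ a h, Or.inr (hτ.inv a).symm⟩⟩
      loopless := ⟨by
        rintro a ⟨h, h1 | h1⟩
        · exact hmoved a h h1.symm
        · exact hmoved' a h h1.symm⟩ }
  have hKG : K ≤ G := by
    rintro a b ⟨h, rfl | rfl⟩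
    · exact hσ.adj a (hmoved a h)
    · exact hτ.adj a (hmoved' a h)
  have hQ : ∀ v, K.Reachable x₀ v → σ v ≠ τ v := by
    intro v hv
    rw [SimpleGraph.reachable_iff_reflTransGen] at hv
    induction hv with
    | refl => exact hx₀
    | tail _ hbc _ => exact hbc.symm.1
  refine ⟨compSub hKG x₀, compSub_cycle hKG x₀ ?_, ?_, fun v hv => hmoved v (hQ v hv)⟩
  · intro v hv
    have hq := hQ v hv
    rw [← Set.ncard_pair hq]
    congr 1
    ext w
    simp only [K, Set.mem_ofPred_eq, Set.mem_insert_iff, Set.mem_singleton_iff]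
    exact ⟨fun h => h.2, fun h => ⟨hq, h⟩⟩
  · rw [Set.ncard_eq_toFinset_card', ← ZMod.natCast_eq_zero_iff_even, Finset.card_eq_sum_ones,
      Nat.cast_sum]
    refine Finset.sum_involution (fun a _ => σ a) ?_ ?_ ?_ ?_
    · intro a _
      decide
    · intro a ha _
      exact hmoved a (hQ a ((Set.mem_toFinset (s := (compSub hKG x₀).verts)).mp ha))
    · intro a ha
      have ha' : K.Reachable x₀ a := (Set.mem_toFinset (s := (compSub hKG x₀).verts)).mp ha
      have : K.Adj a (σ a) := ⟨hQ a ha', Or.inl rfl⟩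
      rw [Set.mem_toFinset]
      exact ha'.trans this.reachable
    · intro a _
      exact hσ.inv a

/-! ### Rank bound by reduction modulo `1 + i` -/

/-- The Hermitian adjacency matrix over the Gaussian integers. -/
noncomputable def gMatrix {V : Type u} (M : MixedGraph V) : Matrix V V GaussianInt := fun u v =>
  if M.arc u v then ⟨0, 1⟩
  else if M.arc v u then ⟨0, -1⟩
  else if M.graph.Adj u v then 1 else 0

/-- Reduction of Gaussian integers modulo `1 + i`. -/
noncomputable def gRed : GaussianInt →+* ZMod 2 := Zsqrtd.lift ⟨1, by decide⟩

lemma gMatrix_complex {V : Type u} [Fintype V] [DecidableEq V] (M : MixedGraph V) (u v : V) :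
    GaussianInt.toComplex (gMatrix M u v) = M.hMatrix u v := by
  unfold gMatrix MixedGraph.hMatrix
  split_ifs <;> simp [GaussianInt.toComplex_def]

lemma gMatrix_red {V : Type u} (M : MixedGraph V) (u v : V) :
    gRed (gMatrix M u v) = if M.graph.Adj u v then 1 else 0 := by
  unfold gMatrix
  by_cases h1 : M.arc u v
  · have := M.arc_adj _ _ h1
    simp [h1, this, gRed, Zsqrtd.lift]
  · by_cases h2 : M.arc v u
    · have := (M.arc_adj _ _ h2).symm
      simp [h1, h2, this, gRed, Zsqrtd.lift]
    · by_cases h3 : M.graph.Adj u v <;> simp [h1, h2, h3]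

lemma rank_ge {V : Type u} [Fintype V] [DecidableEq V] (M : MixedGraph V) {τ : Equiv.Perm V}
    (hτ : IsMInv M.graph τ)
    (hno : ∀ C : M.graph.Subgraph, IsCycleSubgraph C → Even C.verts.ncard →
      ∃ v ∈ C.verts, τ v = v) : τ.support.card ≤ M.hRank := by
  let S := {v : V // τ v ≠ v}
  have hcard : Fintype.card S = τ.support.card := by
    rw [Fintype.card_subtype]
    rfl
  let τ' : Equiv.Perm S := τ.subtypePerm (fun x => by simp)
  have hdet2 : Matrix.det (Matrix.of fun a b : S =>
      if M.graph.Adj a.1 b.1 then (1 : ZMod 2) else 0) = 1 := by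
    rw [Matrix.det_apply']
    have hz : ∀ z : ZMod 2, z + z = 0 := by decide
    have hsign : ∀ π : Equiv.Perm S, (((Equiv.Perm.sign π : ℤˣ) : ℤ) : ZMod 2) = 1 := by
      intro π
      rcases Int.units_eq_one_or (Equiv.Perm.sign π) with h | h <;> rw [h] <;> decide
    simp only [hsign, one_mul, Matrix.of_apply]
    rw [← Finset.add_sum_erase _ _ (Finset.mem_univ τ')]
    have h0 : ∑ π ∈ Finset.univ.erase τ',
        ∏ i : S, (if M.graph.Adj (π i).1 i.1 then (1 : ZMod 2) else 0) = 0 := by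
      refine Finset.sum_involution (fun π _ => π⁻¹) ?_ ?_ ?_ ?_
      · intro π _
        have : ∏ i : S, (if M.graph.Adj (π⁻¹ i).1 i.1 then (1 : ZMod 2) else 0) =
            ∏ i : S, (if M.graph.Adj (π i).1 i.1 then (1 : ZMod 2) else 0) := by
          rw [← Equiv.prod_comp π]
          refine Finset.prod_congr rfl fun i _ => ?_
          rw [show π⁻¹ (π i) = i from π.symm_apply_apply i]
          simp only [M.graph.adj_comm]
        rw [this]
        exact hz _
      · intro π hπ hnz hinv
        rw [Finset.prod_ne_zero_iff] at hnz
        have hadj : ∀ i : S, M.graph.Adj (π i).1 i.1 := by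
          intro i
          have := hnz i (Finset.mem_univ _)
          by_contra hc
          simp [hc] at this
        have hππ : ∀ i, π (π i) = i := by
          intro i
          have h : π⁻¹ (π i) = i := π.symm_apply_apply i
          rwa [hinv] at h
        have hI : IsMInv M.graph (Equiv.Perm.ofSubtype π) := by
          constructor
          · intro v
            by_cases hv : τ v ≠ v
            · rw [Equiv.Perm.ofSubtype_apply_of_mem π hv, Equiv.Perm.ofSubtype_apply_coe, hππ]
            · rw [Equiv.Perm.ofSubtype_apply_of_not_mem π hv,
                Equiv.Perm.ofSubtype_apply_of_not_mem π hv]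
          · intro v hv'
            by_cases hv : τ v ≠ v
            · rw [Equiv.Perm.ofSubtype_apply_of_mem π hv]
              exact (hadj ⟨v, hv⟩).symm
            · exact absurd (Equiv.Perm.ofSubtype_apply_of_not_mem π hv) hv'
        have hne : τ ≠ Equiv.Perm.ofSubtype π := by
          intro h
          apply Finset.ne_of_mem_erase hπ
          ext i
          rw [← Equiv.Perm.ofSubtype_apply_coe π i, ← h]
          rfl
        obtain ⟨C, hC, hev, hC3⟩ := even_cycle_of_two hτ hI (by
          intro v
          by_cases hv : τ v ≠ v
          · rw [Equiv.Perm.ofSubtype_apply_of_mem π hv]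
            exact ⟨fun h => absurd h hv, fun h => absurd h (hadj ⟨v, hv⟩).ne⟩
          · rw [Equiv.Perm.ofSubtype_apply_of_not_mem π hv]
            simpa using hv) hne
        obtain ⟨v, hv, hfix⟩ := hno C hC hev
        exact hC3 v hv hfix
      · intro π hπ
        rw [Finset.mem_erase] at hπ ⊢
        refine ⟨?_, Finset.mem_univ _⟩
        intro h
        apply hπ.1
        rw [← inv_inv π, h]
        ext i
        rw [Equiv.Perm.inv_eq_iff_eq.mpr]
        ext
        exact (hτ.inv i).symm
      · intro π _
        exact inv_inv π
    rw [h0, add_zero]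
    refine Finset.prod_eq_one fun i _ => ?_
    rw [if_pos]
    exact (hτ.adj i.1 i.2).symm
  have hdetg : Matrix.det ((gMatrix M).submatrix (Subtype.val : S → V) Subtype.val) ≠ 0 := by
    intro h
    have h1 := congrArg gRed h
    rw [RingHom.map_det, map_zero] at h1
    have h2 : gRed.mapMatrix ((gMatrix M).submatrix (Subtype.val : S → V) Subtype.val) =
        Matrix.of fun a b : S => if M.graph.Adj a.1 b.1 then (1 : ZMod 2) else 0 := by
      ext a b
      simp [gMatrix_red]
    rw [h2, hdet2] at h1
    exact absurd h1 (by decide)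
  have hdetc : Matrix.det (M.hMatrix.submatrix (Subtype.val : S → V) Subtype.val) ≠ 0 := by
    have h2 : GaussianInt.toComplex.mapMatrix
        ((gMatrix M).submatrix (Subtype.val : S → V) Subtype.val) =
        M.hMatrix.submatrix (Subtype.val : S → V) Subtype.val := by
      ext a b
      simp [gMatrix_complex]
    rw [← h2, ← RingHom.map_det]
    intro h
    exact hdetg (GaussianInt.toComplex_eq_zero.mp h)
  have hrank := Matrix.rank_of_isUnit (M.hMatrix.submatrix (Subtype.val : S → V) Subtype.val)
    ((Matrix.isUnit_iff_isUnit_det _).mpr (isUnit_iff_ne_zero.mpr hdetc))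
  rw [← hcard, ← hrank]
  exact Matrix.rank_submatrix_le _ _ _

/-- Rank bound through a set of vertices meeting all even cycles. -/
lemma rank_ge_hit {V : Type u} [Fintype V] [DecidableEq V] (M : MixedGraph V) {σ : Equiv.Perm V}
    (hσ : IsMInv M.graph σ) (X : Finset V)
    (hX : ∀ C : M.graph.Subgraph, IsCycleSubgraph C → Even C.verts.ncard →
      ∃ v ∈ C.verts, v ∈ X) :
    σ.support.card ≤ M.hRank + 2 * (X ∩ σ.support).card := by
  obtain ⟨τ, hτ, hfix, hc⟩ := restrict_inv hσ X
  have := rank_ge M hτ (fun C hC hev => by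
    obtain ⟨v, hv, hvX⟩ := hX C hC hev
    exact ⟨v, hv, hfix v hvX⟩)
  omega

/-! ### Graphs of cyclomatic number at most one without pendant vertices -/

lemma isolated_reach {V : Type u} [Finite V] {F : SimpleGraph V} {z y : V}
    (hz : {w | F.Adj z w}.ncard = 0) (h : F.Reachable z y) : z = y := by
  rw [SimpleGraph.reachable_iff_reflTransGen] at h
  rcases Relation.ReflTransGen.cases_head h with h | ⟨c, hc, _⟩
  · exact h
  · rw [Set.ncard_eq_zero] at hz
    have : c ∈ {w | F.Adj z w} := hc
    rw [hz] at this
    exact this.elim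

lemma card_le_comps {V : Type u} [Fintype V] {F : SimpleGraph V} (T : Finset V)
    (hT : ∀ a ∈ T, ∀ b ∈ T, F.Reachable a b → a = b) :
    T.card ≤ Nat.card F.ConnectedComponent := by
  have h : Function.Injective (fun a : T => F.connectedComponentMk a.1) := by
    rintro ⟨a, ha⟩ ⟨b, hb⟩ hab
    have hab' := SimpleGraph.ConnectedComponent.exact hab
    exact Subtype.ext (hT a ha b hb hab')
  have := Nat.card_le_card_of_injective _ h
  simpa using this

lemma unicyc {V : Type u} [Fintype V] (F : SimpleGraph V)
    (hdeg : ∀ v, {w | F.Adj v w}.ncard = 0 ∨ 2 ≤ {w | F.Adj v w}.ncard)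
    (hc : cyclomatic F ≤ 1) (x0 : V) (hx0 : {w | F.Adj x0 w}.ncard ≠ 0) :
    (∀ v, {w | F.Adj v w}.ncard ≠ 0 → F.Reachable x0 v) ∧
      (∀ v, {w | F.Adj v w}.ncard ≠ 0 → {w | F.Adj v w}.ncard = 2) := by
  set Z : Finset V := Finset.univ.filter (fun v => {w | F.Adj v w}.ncard = 0) with hZ
  set P : Finset V := Finset.univ.filter (fun v => ¬ {w | F.Adj v w}.ncard = 0) with hP
  have hcard : Z.card + P.card = Fintype.card V := by
    rw [hZ, hP, Finset.card_filter_add_card_filter_not]; rfl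
  have hsum : ∑ v ∈ P, {w | F.Adj v w}.ncard = 2 * F.edgeSet.ncard := by
    rw [← handshake F, hP, Finset.sum_filter]
    refine Finset.sum_congr rfl fun v _ => ?_
    split_ifs with h
    · exact h.symm
    · rfl
  have hP2 : ∀ v ∈ P, 2 ≤ {w | F.Adj v w}.ncard := by
    intro v hv
    have := (Finset.mem_filter.mp hv).2
    exact (hdeg v).resolve_left this
  have hge : 2 * P.card ≤ ∑ v ∈ P, {w | F.Adj v w}.ncard := by
    have := Finset.card_nsmul_le_sum P _ 2 hP2
    simpa [mul_comm] using this
  have hZm : ∀ v, v ∈ Z ↔ {w | F.Adj v w}.ncard = 0 := by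
    intro v; simp only [hZ, Finset.mem_filter, Finset.mem_univ, true_and]
  have hx0Z : x0 ∉ Z := fun h => hx0 ((hZm _).mp h)
  unfold cyclomatic at hc
  have h1 : (insert x0 Z).card ≤ Nat.card F.ConnectedComponent := by
    apply card_le_comps
    intro a ha b hb hab
    rcases Finset.mem_insert.mp ha with rfl | ha
    · rcases Finset.mem_insert.mp hb with rfl | hb
      · rfl
      · exact (isolated_reach ((hZm _).mp hb) hab.symm).symm
    · exact isolated_reach ((hZm _).mp ha) hab
  rw [Finset.card_insert_of_notMem hx0Z] at h1
  constructor
  · intro v hv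
    by_contra hnr
    have hvZ : v ∉ insert x0 Z := by
      intro h
      rcases Finset.mem_insert.mp h with rfl | h
      · exact hnr (SimpleGraph.Reachable.refl _)
      · exact hv ((hZm _).mp h)
    have h2 : (insert v (insert x0 Z)).card ≤ Nat.card F.ConnectedComponent := by
      apply card_le_comps
      intro a ha b hb hab
      by_cases haZ : a ∈ Z
      · exact isolated_reach ((hZm _).mp haZ) hab
      by_cases hbZ : b ∈ Z
      · exact (isolated_reach ((hZm _).mp hbZ) hab.symm).symm
      simp only [Finset.mem_insert, haZ, hbZ, or_false] at ha hb
      rcases ha with rfl | rfl <;> rcases hb with rfl | rfl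
      · rfl
      · exact (hnr hab.symm).elim
      · exact (hnr hab).elim
      · rfl
    rw [Finset.card_insert_of_notMem hvZ, Finset.card_insert_of_notMem hx0Z] at h2
    omega
  · intro v hv
    have hvP : v ∈ P := by
      simp only [hP, Finset.mem_filter, Finset.mem_univ, true_and]; exact hv
    have hle : ∑ v ∈ P, {w | F.Adj v w}.ncard ≤ ∑ v ∈ P, 2 := by
      simp only [Finset.sum_const, smul_eq_mul]
      omega
    have heq := le_antisymm (Finset.sum_le_sum hP2) hle
    exact ((Finset.sum_eq_sum_iff_of_le hP2).mp heq v hvP).symm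

lemma double_count {V : Type u} [Fintype V] (F : SimpleGraph V) (D : V → Prop)
    (h1 : ∀ a b, F.Adj a b → D a ∨ D b) (h2 : ∀ a b, F.Adj a b → ¬ (D a ∧ D b))
    (hdeg : ∀ v, {w | F.Adj v w}.ncard ≠ 0 → {w | F.Adj v w}.ncard = 2)
    (hD : ∀ v, D v → {w | F.Adj v w}.ncard ≠ 0) :
    Even {v | {w | F.Adj v w}.ncard ≠ 0}.ncard := by
  have hd : ∀ v, {w | F.Adj v w}.ncard = ∑ w, if F.Adj v w then 1 else 0 := by
    intro v
    rw [Set.ncard_eq_toFinset_card', Finset.sum_ite]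
    simp
  have hA : ∑ v ∈ Finset.univ.filter D, {w | F.Adj v w}.ncard =
      ∑ v ∈ Finset.univ.filter (fun v => ¬ D v), {w | F.Adj v w}.ncard := by
    simp only [hd, Finset.sum_filter]
    have e1 : ∀ v, (if D v then ∑ w, (if F.Adj v w then 1 else 0) else 0) =
        ∑ w, if D v ∧ F.Adj v w then 1 else 0 := by
      intro v; by_cases h : D v <;> simp [h]
    have e2 : ∀ v, (if ¬ D v then ∑ w, (if F.Adj v w then 1 else 0) else 0) =
        ∑ w, if ¬ D v ∧ F.Adj v w then 1 else 0 := by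
      intro v; by_cases h : D v <;> simp [h]
    rw [Finset.sum_congr rfl fun v _ => e1 v, Finset.sum_congr rfl fun v _ => e2 v,
      Finset.sum_comm]
    refine Finset.sum_congr rfl fun v _ => Finset.sum_congr rfl fun w _ => ?_
    have : (D w ∧ F.Adj w v) ↔ (¬ D v ∧ F.Adj v w) := by
      constructor
      · rintro ⟨hw, hwv⟩
        exact ⟨fun hv => h2 _ _ hwv ⟨hw, hv⟩, hwv.symm⟩
      · rintro ⟨hv, hvw⟩
        exact ⟨(h1 _ _ hvw).resolve_left hv, hvw.symm⟩
    simp only [this]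
  have hB : ∑ v ∈ Finset.univ.filter D, {w | F.Adj v w}.ncard =
      2 * (Finset.univ.filter D).card := by
    rw [Finset.sum_congr rfl (g := fun _ => 2), Finset.sum_const, smul_eq_mul, mul_comm]
    intro v hv
    exact hdeg v (hD v (Finset.mem_filter.mp hv).2)
  have hC : ∑ v, {w | F.Adj v w}.ncard =
      2 * {v | {w | F.Adj v w}.ncard ≠ 0}.ncard := by
    rw [Set.ncard_eq_toFinset_card', mul_comm, ← smul_eq_mul, ← Finset.sum_const,
      Set.toFinset_ofPred, Finset.sum_filter]
    refine Finset.sum_congr rfl fun v _ => ?_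
    split_ifs with h
    · exact hdeg v h
    · push Not at h; exact h
  have hS := Finset.sum_filter_add_sum_filter_not Finset.univ D
    (fun v => {w | F.Adj v w}.ncard)
  rw [← hA, hB, hC] at hS
  exact ⟨(Finset.univ.filter D).card, by omega⟩

/-! ### The even cycles -/

/-- The finset of even cycles. -/
noncomputable def evenCycles {V : Type u} [Fintype V] (G : SimpleGraph V) : Finset G.Subgraph :=
  (Set.toFinite {C : G.Subgraph | IsCycleSubgraph C ∧ Even C.verts.ncard}).toFinset

lemma mem_evenCycles {V : Type u} [Fintype V] {G : SimpleGraph V} {C : G.Subgraph} :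
    C ∈ evenCycles G ↔ IsCycleSubgraph C ∧ Even C.verts.ncard := by
  simp [evenCycles]

lemma card_evenCycles {V : Type u} [Fintype V] (G : SimpleGraph V) :
    (evenCycles G).card = evenCycleCount G := by
  rw [evenCycleCount, evenCycles, Set.ncard_eq_toFinset_card]

lemma hit_bound {V : Type u} [Fintype V] [DecidableEq V] (M : MixedGraph V)
    {s : ℤ} (hs : s = 0 ∨ s = 1)
    (hr : (M.hRank : ℤ) =
      2 * (matchingNumber M.graph : ℤ) - 2 * (evenCycleCount M.graph : ℤ) + s)
    {σ : Equiv.Perm V} (hσ : IsMInv M.graph σ)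
    (hmax : σ.support.card = 2 * matchingNumber M.graph)
    (p : M.graph.Subgraph → V) (hp : ∀ C ∈ evenCycles M.graph, p C ∈ C.verts) :
    evenCycleCount M.graph ≤ ((evenCycles M.graph).image p ∩ σ.support).card := by
  have h := rank_ge_hit M hσ ((evenCycles M.graph).image p) (fun C hC hev =>
    ⟨p C, hp C (mem_evenCycles.mpr ⟨hC, hev⟩),
      Finset.mem_image_of_mem _ (mem_evenCycles.mpr ⟨hC, hev⟩)⟩)
  rw [hmax] at h
  omega

lemma exists_pick {V : Type u} [Fintype V] (G : SimpleGraph V) [Nonempty V] :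
    ∃ p : G.Subgraph → V, ∀ C ∈ evenCycles G, p C ∈ C.verts := by
  have : ∀ C : G.Subgraph, ∃ v, C ∈ evenCycles G → v ∈ C.verts := by
    intro C
    by_cases h : C ∈ evenCycles G
    · obtain ⟨v, hv⟩ := (mem_evenCycles.mp h).1.1.nonempty
      exact ⟨v, fun _ => hv⟩
    · exact ⟨Classical.arbitrary V, fun h' => (h h').elim⟩
  choose p hp using this
  exact ⟨p, hp⟩

lemma even_disjoint {V : Type u} [Fintype V] [DecidableEq V] (M : MixedGraph V)
    {s : ℤ} (hs : s = 0 ∨ s = 1)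
    (hr : (M.hRank : ℤ) =
      2 * (matchingNumber M.graph : ℤ) - 2 * (evenCycleCount M.graph : ℤ) + s)
    {C₁ C₂ : M.graph.Subgraph} (h₁ : C₁ ∈ evenCycles M.graph) (h₂ : C₂ ∈ evenCycles M.graph)
    (hne : C₁ ≠ C₂) {x : V} (hx₁ : x ∈ C₁.verts) (hx₂ : x ∈ C₂.verts) : False := by
  have : Nonempty V := ⟨x⟩
  obtain ⟨p, hp⟩ := exists_pick M.graph
  obtain ⟨σ, hσ, hmax⟩ := exists_max_inv M.graph
  have hb := hit_bound M hs hr hσ hmax (fun C => if C = C₁ ∨ C = C₂ then x else p C) (by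
    intro C hC
    split_ifs with h
    · rcases h with rfl | rfl <;> assumption
    · exact hp C hC)
  have hsub : (evenCycles M.graph).image (fun C => if C = C₁ ∨ C = C₂ then x else p C) ⊆
      ((evenCycles M.graph).erase C₂).image (fun C => if C = C₁ ∨ C = C₂ then x else p C) := by
    intro y hy
    obtain ⟨C, hC, rfl⟩ := Finset.mem_image.mp hy
    by_cases hCC : C = C₂
    · subst hCC
      exact Finset.mem_image.mpr ⟨C₁, Finset.mem_erase.mpr ⟨hne, h₁⟩, by simp⟩
    · exact Finset.mem_image_of_mem _ (Finset.mem_erase.mpr ⟨hCC, hC⟩)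
  have hc := (Finset.card_le_card (Finset.inter_subset_left.trans hsub)).trans
    Finset.card_image_le (a := _) |> hb.trans
  have := Finset.card_erase_lt_of_mem h₂
  rw [card_evenCycles] at this
  omega

lemma missed_not_even {V : Type u} [Fintype V] [DecidableEq V] (M : MixedGraph V)
    {s : ℤ} (hs : s = 0 ∨ s = 1)
    (hr : (M.hRank : ℤ) =
      2 * (matchingNumber M.graph : ℤ) - 2 * (evenCycleCount M.graph : ℤ) + s)
    {C₀ : M.graph.Subgraph} (h₀ : C₀ ∈ evenCycles M.graph)
    {x : V} (hx : x ∈ C₀.verts) (hm : Missed M.graph x) : False := by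
  have : Nonempty V := ⟨x⟩
  obtain ⟨p, hp⟩ := exists_pick M.graph
  obtain ⟨σ, hσ, hmax, hfix⟩ := hm
  have hb := hit_bound M hs hr hσ hmax (fun C => if C = C₀ then x else p C) (by
    intro C hC
    split_ifs with h
    · subst h; exact hx
    · exact hp C hC)
  have hsub : (evenCycles M.graph).image (fun C => if C = C₀ then x else p C) ∩ σ.support ⊆
      ((evenCycles M.graph).erase C₀).image (fun C => if C = C₀ then x else p C) := by
    intro y hy
    obtain ⟨hy1, hy2⟩ := Finset.mem_inter.mp hy
    obtain ⟨C, hC, rfl⟩ := Finset.mem_image.mp hy1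
    by_cases hCC : C = C₀
    · subst hCC
      simp [hfix] at hy2
    · exact Finset.mem_image_of_mem _ (Finset.mem_erase.mpr ⟨hCC, hC⟩)
  have hc := hb.trans ((Finset.card_le_card hsub).trans Finset.card_image_le)
  have := Finset.card_erase_lt_of_mem h₀
  rw [card_evenCycles] at this
  omega

/-- The graph of edges meeting a missed vertex. -/
def missGraph {V : Type u} [Fintype V] [DecidableEq V] (G : SimpleGraph V) : SimpleGraph V where
  Adj a b := G.Adj a b ∧ (Missed G a ∨ Missed G b)
  symm := ⟨fun _ _ h => ⟨h.1.symm, h.2.symm⟩⟩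
  loopless := ⟨fun _ h => h.1.ne rfl⟩

lemma missGraph_le {V : Type u} [Fintype V] [DecidableEq V] (G : SimpleGraph V) :
    missGraph G ≤ G := fun _ _ h => h.1

lemma missGraph_nbrs {V : Type u} [Fintype V] [DecidableEq V] {G : SimpleGraph V} {v : V}
    (hv : Missed G v) : {w | (missGraph G).Adj v w} = {w | G.Adj v w} := by
  ext w
  exact ⟨fun h => h.1, fun h => ⟨h, Or.inl hv⟩⟩

lemma missGraph_cyc {V : Type u} [Fintype V] [DecidableEq V] (M : MixedGraph V)
    {s : ℤ} (hs : s = 0 ∨ s = 1)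
    (hκ : (evenCycleCount M.graph : ℤ) = cyclomatic M.graph - 1)
    (hr : (M.hRank : ℤ) =
      2 * (matchingNumber M.graph : ℤ) - 2 * (evenCycleCount M.graph : ℤ) + s) :
    cyclomatic (missGraph M.graph) ≤ 1 := by
  have h := cyc_family (missGraph M.graph) (fun C : M.graph.Subgraph => C.spanningCoe)
    (evenCycles M.graph) M.graph (missGraph_le _) (fun C _ => C.spanningCoe_le)
    (by
      intro C hC a b hab hF
      have hab' : C.Adj a b := hab
      rcases hF.2 with h | h
      · exact missed_not_even M hs hr hC (C.edge_vert hab') h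
      · exact missed_not_even M hs hr hC (C.edge_vert hab'.symm) h)
    (by
      intro C hC D hD hne a b hab hab2
      exact even_disjoint M hs hr hC hD hne (C.edge_vert (w := b) hab)
        (D.edge_vert (w := b) hab2))
    (fun C hC => cycle_nonbridge C (mem_evenCycles.mp hC).1)
  rw [card_evenCycles] at h
  omega

lemma two_le_of {V : Type u} [Finite V] {S : Set V} {a b : V} (ha : a ∈ S) (hb : b ∈ S)
    (h : a ≠ b) : 2 ≤ S.ncard :=
  (Set.one_lt_ncard_iff (Set.toFinite _)).mpr ⟨a, b, ha, hb, h⟩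

lemma missGraph_deg {V : Type u} [Fintype V] [DecidableEq V] (G : SimpleGraph V)
    (hnp : NoPendantVerts G) (hni : ∀ v : V, {w | G.Adj v w}.ncard ≠ 0) (v : V) :
    {w | (missGraph G).Adj v w}.ncard = 0 ∨ 2 ≤ {w | (missGraph G).Adj v w}.ncard := by
  by_cases hv : Missed G v
  · rw [missGraph_nbrs hv]
    have := hnp v
    have := hni v
    omega
  · by_cases h0 : {w | (missGraph G).Adj v w}.ncard = 0
    · exact Or.inl h0
    · right
      obtain ⟨a, ha⟩ := Set.nonempty_of_ncard_ne_zero h0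
      have ha' : (missGraph G).Adj v a := ha
      have hma := ha'.2.resolve_left hv
      obtain ⟨w, hw, hwa, hvw⟩ := missed_step G hma ha'.1.symm
      exact two_le_of (a := w) (b := a) ⟨hvw, Or.inr hw⟩ ha hwa

/-- Let G̃ be a mixed graph whose underlying graph has no pendant
and no isolated vertices, with κ(G) = c(G) − 1 and c(G) ≥ 2. If
r(G̃) = 2m(G) − 2κ(G) + s with s ∈ {0,1}, then either G has a perfect matching or
G has a connected component which is an odd cycle. -/
theorem perfectMatching_or_oddCycleComponent
    {V : Type u} [Fintype V] [DecidableEq V] (M : MixedGraph V)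
    (hnp : NoPendantVerts M.graph)
    (hni : ∀ v : V, {w | M.graph.Adj v w}.ncard ≠ 0)
    (hκ : (evenCycleCount M.graph : ℤ) = cyclomatic M.graph - 1)
    (hc : 2 ≤ cyclomatic M.graph) (s : ℤ) (hs : s = 0 ∨ s = 1)
    (hr : (M.hRank : ℤ) =
      2 * (matchingNumber M.graph : ℤ) - 2 * (evenCycleCount M.graph : ℤ) + s) :
    (∃ N : M.graph.Subgraph, N.IsPerfectMatching) ∨
      ∃ c : M.graph.ConnectedComponent,
        IsCycleMG (M.comp c) ∧ Odd (Nat.card c.supp) := by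
  by_cases hpm : ∃ N : M.graph.Subgraph, N.IsPerfectMatching
  · exact Or.inl hpm
  right
  obtain ⟨v0, hv0⟩ := exists_missed M.graph hpm
  set F := missGraph M.graph with hF
  have hdegM : ∀ v, Missed M.graph v → {w | F.Adj v w}.ncard ≠ 0 := by
    intro v hv
    rw [hF, missGraph_nbrs hv]
    exact hni v
  obtain ⟨hreach, hdeg⟩ := unicyc F (missGraph_deg M.graph hnp hni)
    (missGraph_cyc M hs hκ hr) v0 (hdegM v0 hv0)
  -- reachable vertices are exactly the non-isolated ones
  have hreach' : ∀ v, F.Reachable v0 v → {w | F.Adj v w}.ncard ≠ 0 := by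
    intro v hv h0
    have := isolated_reach h0 hv.symm
    subst this
    exact hdegM v hv0 h0
  have hcyc : IsCycleSubgraph (compSub (missGraph_le M.graph) v0) :=
    compSub_cycle _ _ (fun v hv => hdeg v (hreach' v hv))
  have hset : {y | F.Reachable v0 y} = {v | {w | F.Adj v w}.ncard ≠ 0} := by
    ext v
    exact ⟨hreach' v, hreach v⟩
  have hodd : Odd {y | F.Reachable v0 y}.ncard := by
    rw [← Nat.not_even_iff_odd]
    intro hev
    exact missed_not_even M hs hr (mem_evenCycles.mpr ⟨hcyc, hev⟩)
      (SimpleGraph.Reachable.refl _ : F.Reachable v0 v0) hv0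
  -- an edge with both ends missed
  have hedge : ∃ a b, F.Adj a b ∧ Missed M.graph a ∧ Missed M.graph b := by
    by_contra hcon
    push Not at hcon
    have hev := double_count F (Missed M.graph) (fun a b h => h.2)
      (fun a b h hab => hcon a b h hab.1 hab.2) hdeg hdegM
    rw [← hset] at hev
    exact (Nat.not_even_iff_odd.mpr hodd) hev
  obtain ⟨a0, b0, hab0, ha0, hb0⟩ := hedge
  have hprop : ∀ v w, (Missed M.graph v ∧ ∃ u, F.Adj v u ∧ Missed M.graph u) → F.Adj v w →
      (Missed M.graph w ∧ ∃ u, F.Adj w u ∧ Missed M.graph u) := by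
    rintro v w ⟨hv, u, hvu, hu⟩ hvw
    refine ⟨?_, v, hvw.symm, hv⟩
    by_cases hwu : w = u
    · subst hwu; exact hu
    obtain ⟨w', hw', hne, hvw'⟩ := missed_step M.graph hu hvu.1.symm
    by_cases hww : w = w'
    · subst hww; exact hw'
    exfalso
    have h2 := hdeg v (hdegM v hv)
    have h3 : 2 < {x | F.Adj v x}.ncard :=
      (Set.two_lt_ncard_iff (Set.toFinite _)).mpr
        ⟨w, u, w', hvw, hvu, ⟨hvw', Or.inl hv⟩, hwu, hww, hne.symm⟩
    omega
  have hall : ∀ v, F.Reachable a0 v → Missed M.graph v := by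
    intro v hv
    rw [SimpleGraph.reachable_iff_reflTransGen] at hv
    have : Missed M.graph v ∧ ∃ u, F.Adj v u ∧ Missed M.graph u := by
      induction hv with
      | refl => exact ⟨ha0, b0, hab0, hb0⟩
      | tail _ hbc ih => exact hprop _ _ ih hbc
    exact this.1
  have h0a : F.Reachable v0 a0 := hreach a0 (hdegM a0 ha0)
  have hall' : ∀ v, F.Reachable v0 v → Missed M.graph v := fun v hv =>
    hall v (h0a.symm.trans hv)
  have hGF : ∀ v, M.graph.Reachable v0 v → F.Reachable v0 v := by
    intro v hv
    rw [SimpleGraph.reachable_iff_reflTransGen] at hv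
    induction hv with
    | refl => exact SimpleGraph.Reachable.refl _
    | @tail b c _ hbc ih =>
      exact ih.trans (SimpleGraph.Adj.reachable ⟨hbc, Or.inl (hall' b ih)⟩)
  have hsupp : (M.graph.connectedComponentMk v0).supp = {y | F.Reachable v0 y} := by
    ext v
    rw [SimpleGraph.ConnectedComponent.mem_supp_iff, SimpleGraph.ConnectedComponent.eq]
    exact ⟨fun h => hGF v h.symm, fun h => (h.mono (missGraph_le M.graph)).symm⟩
  refine ⟨M.graph.connectedComponentMk v0, ⟨?_, ?_⟩, ?_⟩
  · have hcon : (M.comp (M.graph.connectedComponentMk v0)).graph.Connected :=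
      SimpleGraph.ConnectedComponent.connected_toSimpleGraph _
    exact ⟨SimpleGraph.Subgraph.topIso.connected_iff.mpr hcon⟩
  · rintro ⟨v, hv⟩ -
    have hv' : F.Reachable v0 v := by
      have := hv
      rw [hsupp] at this
      exact this
    have h2 := hdeg v (hreach' v hv')
    rw [← h2, ← Set.ncard_image_of_injective _ Subtype.val_injective]
    congr 1
    ext w
    constructor
    · rintro ⟨w, hw, rfl⟩
      exact ⟨hw, Or.inl (hall' v hv')⟩
    · intro hw
      have hw' : F.Adj v w := hw
      refine ⟨⟨w, ?_⟩, hw'.1, rfl⟩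
      rw [hsupp]
      exact hv'.trans hw'.reachable
  · rw [Nat.card_coe_set_eq, hsupp]
    exact hodd

end MixedPaper
end

section
/- Let G~ be a mixed bicyclic graph whose underlying graph is ∞(p,1,q) with p even and q odd. Then r(G~) = 2m(G) − 2κ(G) if and only if the odd cycle of G~ has odd signature and the even cycle C~_p of G~ satisfies σ(C~_p) ≡ p (mod 4). -/
open scoped Classical

namespace MixedPaper

universe u

variable {V : Type u}

/-! ### Entries of the Hermitian matrix -/

section Core

variable [Fintype V] [DecidableEq V] (M : MixedGraph V)

theorem hMatrix_zero {a b : V} (h : ¬ M.graph.Adj a b) : M.hMatrix a b = 0 := by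
  have h1 : ¬ M.arc a b := fun h' => h (M.arc_adj a b h')
  have h2 : ¬ M.arc b a := fun h' => h (M.arc_adj b a h').symm
  simp [MixedGraph.hMatrix, h, h1, h2]

theorem hMatrix_mul_swap {a b : V} (h : M.graph.Adj a b) :
    M.hMatrix a b * M.hMatrix b a = 1 := by
  have h1 := M.arc_antisymm a b
  have h3 := h.symm
  by_cases ha : M.arc a b <;> by_cases hb : M.arc b a <;>
    simp_all [MixedGraph.hMatrix]

theorem mulVec_two (h : V → ℂ) {a b c : V} (hbc : b ≠ c)
    (hadj : ∀ w, M.graph.Adj a w ↔ w = b ∨ w = c) :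
    (M.hMatrix.mulVec h) a = M.hMatrix a b * h b + M.hMatrix a c * h c := by
  rw [Matrix.mulVec, dotProduct, ← Finset.sum_pair (f := fun w => M.hMatrix a w * h w) hbc]
  symm
  apply Finset.sum_subset (Finset.subset_univ _)
  intro w _ hw
  rw [hMatrix_zero M, zero_mul]
  rw [hadj]; simpa using hw

theorem mulVec_four (h : V → ℂ) {a b c d e : V} (hn : [b, c, d, e].Nodup)
    (hadj : ∀ w, M.graph.Adj a w ↔ w = b ∨ w = c ∨ w = d ∨ w = e) :
    (M.hMatrix.mulVec h) a = M.hMatrix a b * h b + M.hMatrix a c * h c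
      + M.hMatrix a d * h d + M.hMatrix a e * h e := by
  have : M.hMatrix a b * h b + M.hMatrix a c * h c
      + M.hMatrix a d * h d + M.hMatrix a e * h e =
      ∑ w ∈ [b, c, d, e].toFinset, M.hMatrix a w * h w := by
    rw [List.sum_toFinset _ hn]; simp [add_assoc]
  rw [Matrix.mulVec, dotProduct, this]
  symm
  apply Finset.sum_subset (Finset.subset_univ _)
  intro w _ hw
  rw [hMatrix_zero M, zero_mul]
  rw [hadj]; simpa using hw

/-- Product of the matrix entries along the first `n` steps of a vertex sequence. -/
noncomputable def pw (s : ℕ → V) (n : ℕ) : ℂ :=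
  ∏ k ∈ Finset.range n, M.hMatrix (s k) (s (k + 1))

theorem pw_zero (s : ℕ → V) : pw M s 0 = 1 := by simp [pw]

theorem pw_succ (s : ℕ → V) (n : ℕ) :
    pw M s (n + 1) = pw M s n * M.hMatrix (s n) (s (n + 1)) := Finset.prod_range_succ _ _

theorem pw_ne_zero (s : ℕ → V) (n : ℕ) (h : ∀ i < n, M.graph.Adj (s i) (s (i + 1))) :
    pw M s n ≠ 0 := by
  rw [pw, Finset.prod_ne_zero_iff]
  intro i hi
  exact left_ne_zero_of_mul_eq_one (hMatrix_mul_swap M (h i (by simpa using hi)))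

theorem pw_back (s : ℕ → V) (n : ℕ) (h : M.graph.Adj (s n) (s (n + 1))) :
    pw M s (n + 1) * M.hMatrix (s (n + 1)) (s n) = pw M s n := by
  rw [pw_succ, mul_assoc, hMatrix_mul_swap M h, mul_one]

theorem step_iff (s : ℕ → V) (n : ℕ) (hs : ∀ i < n, M.graph.Adj (s i) (s (i + 1)))
    (h : V → ℂ) (i : ℕ) (hi : i + 1 < n) :
    M.hMatrix (s (i + 1)) (s i) * h (s i) + M.hMatrix (s (i + 1)) (s (i + 2)) * h (s (i + 2)) = 0 ↔
      pw M s (i + 2) * h (s (i + 2)) = - (pw M s i * h (s i)) := by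
  have h1 : pw M s (i + 1) ≠ 0 := pw_ne_zero M s _ fun j hj => hs j (by omega)
  have h2 := pw_back M s i (hs i (by omega))
  have h3 := pw_succ M s (i + 1)
  rw [← mul_right_inj' h1, mul_zero, ← h2, h3]
  constructor <;> intro h <;> linear_combination h

/-- A two-step alternating recursion. -/
theorem alt_rec (g : ℕ → ℂ) (n : ℕ) (hg : ∀ i, i + 1 < n → g (i + 2) = - g i) :
    ∀ k, (2 * k ≤ n → g (2 * k) = (-1) ^ k * g 0) ∧
      (2 * k + 1 ≤ n → g (2 * k + 1) = (-1) ^ k * g 1) := by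
  intro k
  induction k with
  | zero => simp
  | succ k ih =>
    constructor
    · intro h
      rw [show 2 * (k + 1) = 2 * k + 2 by ring, hg _ (by omega), ih.1 (by omega)]; ring
    · intro h
      rw [show 2 * (k + 1) + 1 = 2 * k + 1 + 2 by ring, hg _ (by omega), ih.2 (by omega)]; ring

/-- Concrete coordinates on an infinity graph. -/
structure InfData (G : SimpleGraph V) (s t : ℕ → V) (p q : ℕ) : Prop where
  hp : 3 ≤ p
  hq : 3 ≤ q
  t0 : t 0 = s 0
  sp : s p = s 0
  tq : t q = s 0
  sinj : ∀ i j, i < p → j < p → s i = s j → i = j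
  tinj : ∀ i j, i < q → j < q → t i = t j → i = j
  disj : ∀ i j, i < p → 0 < j → j < q → s i ≠ t j
  cover : ∀ w, (∃ i, i < p ∧ w = s i) ∨ (∃ j, 0 < j ∧ j < q ∧ w = t j)
  adjx : ∀ w, G.Adj (s 0) w ↔ w = s 1 ∨ w = s (p - 1) ∨ w = t 1 ∨ w = t (q - 1)
  adjs : ∀ i w, i + 1 < p → (G.Adj (s (i + 1)) w ↔ w = s i ∨ w = s (i + 2))
  adjt : ∀ i w, i + 1 < q → (G.Adj (t (i + 1)) w ↔ w = t i ∨ w = t (i + 2))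

variable {M} {s t : ℕ → V} {p q : ℕ}

theorem InfData.sadj {G : SimpleGraph V} (D : InfData G s t p q) :
    ∀ i < p, G.Adj (s i) (s (i + 1)) := by
  intro i hi
  rcases i with _ | i
  · rw [D.adjx]; simp
  · rw [D.adjs _ _ hi]; simp

theorem InfData.tadj {G : SimpleGraph V} (D : InfData G s t p q) :
    ∀ i < q, G.Adj (t i) (t (i + 1)) := by
  intro i hi
  rcases i with _ | i
  · rw [D.t0, D.adjx]; simp
  · rw [D.adjt _ _ hi]; simp

theorem InfData.glue {G : SimpleGraph V} (D : InfData G s t p q) {α : Type*} [Nonempty α]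
    (F K : ℕ → α) :
    ∃ h : V → α, (∀ i < p, h (s i) = F i) ∧ (∀ j, 0 < j → j < q → h (t j) = K j) := by
  have : ∀ w, ∃ y : α, (∀ i < p, w = s i → y = F i) ∧ (∀ j, 0 < j → j < q → w = t j → y = K j) := by
    intro w
    rcases D.cover w with ⟨i, hi, rfl⟩ | ⟨j, hj, hj', rfl⟩
    · refine ⟨F i, ?_, ?_⟩
      · intro i' hi' h; rw [D.sinj i i' hi hi' h]
      · intro j hj hj' h; exact absurd h (D.disj i j hi hj hj')
    · refine ⟨K j, ?_, ?_⟩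
      · intro i hi h; exact absurd h.symm (D.disj i j hi hj hj')
      · intro j' h0 h1 h; rw [D.tinj j j' hj' h1 h]
  choose h h1 h2 using this
  exact ⟨h, fun i hi => h1 _ i hi rfl, fun j hj hj' => h2 _ j hj hj' rfl⟩

theorem InfData.ker_iff (D : InfData M.graph s t p q) (h : V → ℂ) :
    M.hMatrix.mulVec h = 0 ↔
      (∀ i, i + 1 < p → pw M s (i + 2) * h (s (i + 2)) = - (pw M s i * h (s i))) ∧
      (∀ i, i + 1 < q → pw M t (i + 2) * h (t (i + 2)) = - (pw M t i * h (t i))) ∧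
      pw M s 1 * h (s 1) + (pw M s p)⁻¹ * (pw M s (p - 1) * h (s (p - 1))) +
        pw M t 1 * h (t 1) + (pw M t q)⁻¹ * (pw M t (q - 1) * h (t (q - 1))) = 0 := by
  have hp := D.hp
  have hq := D.hq
  have hs : ∀ i, i + 1 < p → (M.hMatrix.mulVec h (s (i + 1)) = 0 ↔
      pw M s (i + 2) * h (s (i + 2)) = - (pw M s i * h (s i))) := by
    intro i hi
    rw [← step_iff M s p D.sadj h i hi, mulVec_two M h _ (fun w => D.adjs i w hi)]
    intro he
    by_cases h2 : i + 2 = p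
    · rw [h2, D.sp] at he
      have := D.sinj _ _ (by omega) (by omega) he
      omega
    · have := D.sinj _ _ (by omega) (by omega) he
      omega
  have ht : ∀ i, i + 1 < q → (M.hMatrix.mulVec h (t (i + 1)) = 0 ↔
      pw M t (i + 2) * h (t (i + 2)) = - (pw M t i * h (t i))) := by
    intro i hi
    rw [← step_iff M t q D.tadj h i hi, mulVec_two M h _ (fun w => D.adjt i w hi)]
    intro he
    by_cases h2 : i + 2 = q
    · rw [h2, D.tq, ← D.t0] at he
      have := D.tinj _ _ (by omega) (by omega) he
      omega
    · have := D.tinj _ _ (by omega) (by omega) he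
      omega
  have hx : M.hMatrix.mulVec h (s 0) = pw M s 1 * h (s 1) +
        (pw M s p)⁻¹ * (pw M s (p - 1) * h (s (p - 1))) +
        pw M t 1 * h (t 1) + (pw M t q)⁻¹ * (pw M t (q - 1) * h (t (q - 1))) := by
    rw [mulVec_four M h _ D.adjx]
    · have e1 : pw M s 1 = M.hMatrix (s 0) (s 1) := by simp [pw]
      have e2 : pw M t 1 = M.hMatrix (s 0) (t 1) := by simp [pw, D.t0]
      have e3 := pw_back M s (p - 1) (D.sadj _ (by omega))
      have e4 := pw_back M t (q - 1) (D.tadj _ (by omega))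
      rw [show p - 1 + 1 = p by omega, D.sp] at e3
      rw [show q - 1 + 1 = q by omega, D.tq] at e4
      have n1 := pw_ne_zero M s p D.sadj
      have n2 := pw_ne_zero M t q D.tadj
      rw [e1, e2, ← e3, ← e4]
      field_simp
    · have a1 : s 1 ≠ s (p - 1) := fun e => by
        have := D.sinj _ _ (by omega) (by omega) e; omega
      have a2 : t 1 ≠ t (q - 1) := fun e => by
        have := D.tinj _ _ (by omega) (by omega) e; omega
      have a3 := D.disj 1 1 (by omega) (by omega) (by omega)
      have a4 := D.disj 1 (q - 1) (by omega) (by omega) (by omega)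
      have a5 := D.disj (p - 1) 1 (by omega) (by omega) (by omega)
      have a6 := D.disj (p - 1) (q - 1) (by omega) (by omega) (by omega)
      simp [a1, a2, a3, a4, a5, a6]
  rw [← hx]
  constructor
  · intro H
    refine ⟨fun i hi => (hs i hi).1 ?_, fun i hi => (ht i hi).1 ?_, ?_⟩ <;> simp [H]
  · rintro ⟨H1, H2, H3⟩
    funext w
    rcases D.cover w with ⟨i, hi, rfl⟩ | ⟨j, hj, hj', rfl⟩
    · rcases i with _ | i
      · simpa using H3
      · exact (hs i hi).2 (H1 i hi)
    · obtain ⟨j, rfl⟩ : ∃ k, j = k + 1 := ⟨j - 1, by omega⟩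
      have hfin := H2 j hj'
      exact (ht j (by omega)).2 hfin

/-- Consequences of lying in the kernel. -/
theorem InfData.ker_nec {m l : ℕ} (D : InfData M.graph s t (2 * m) (2 * l + 1)) (h : V → ℂ)
    (hk : M.hMatrix.mulVec h = 0) :
    pw M s (2 * m) * h (s 0) = (-1) ^ m * h (s 0) ∧
    pw M t (2 * l + 1) * h (s 0) = (-1) ^ l * (pw M t 1 * h (t 1)) ∧
    pw M s 1 * h (s 1) - (pw M s (2 * m))⁻¹ * ((-1) ^ m * (pw M s 1 * h (s 1))) +
      pw M t 1 * h (t 1) + (pw M t (2 * l + 1))⁻¹ * ((-1) ^ l * h (s 0)) = 0 ∧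
    (∀ k, (2 * k ≤ 2 * m → pw M s (2 * k) * h (s (2 * k)) = (-1) ^ k * h (s 0)) ∧
      (2 * k + 1 ≤ 2 * m →
        pw M s (2 * k + 1) * h (s (2 * k + 1)) = (-1) ^ k * (pw M s 1 * h (s 1)))) ∧
    (∀ k, (2 * k ≤ 2 * l + 1 → pw M t (2 * k) * h (t (2 * k)) = (-1) ^ k * h (s 0)) ∧
      (2 * k + 1 ≤ 2 * l + 1 →
        pw M t (2 * k + 1) * h (t (2 * k + 1)) = (-1) ^ k * (pw M t 1 * h (t 1)))) := by
  obtain ⟨H1, H2, H3⟩ := (D.ker_iff h).1 hk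
  have hp := D.hp
  have R1 := alt_rec (fun i => pw M s i * h (s i)) _ H1
  have R2 := alt_rec (fun i => pw M t i * h (t i)) _ H2
  simp only [pw_zero, one_mul, D.t0] at R1 R2
  refine ⟨?_, ?_, ?_, R1, R2⟩
  · have := (R1 m).1 le_rfl
    rwa [D.sp] at this
  · have := (R2 l).2 le_rfl
    rwa [D.tq] at this
  · have h1 := (R1 (m - 1)).2 (by omega)
    have h2 := (R2 l).1 (by omega)
    rw [show 2 * (m - 1) + 1 = 2 * m - 1 by omega] at h1
    rw [h1, show 2 * l + 1 - 1 = 2 * l by omega, h2] at H3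
    obtain ⟨m', rfl⟩ : ∃ k, m = k + 1 := ⟨m - 1, by omega⟩
    rw [show m' + 1 - 1 = m' by omega] at H3
    rw [← H3]; ring

theorem InfData.ker_suff {m l : ℕ} (D : InfData M.graph s t (2 * m) (2 * l + 1))
    (hP : pw M s (2 * m) = (-1) ^ m)
    (hQ : pw M t (2 * l + 1) + (pw M t (2 * l + 1))⁻¹ = 0) (a b : ℂ) :
    ∃ h : V → ℂ, M.hMatrix.mulVec h = 0 ∧ h (s 0) = a ∧ h (s 1) = b := by
  have hp := D.hp
  have hq := D.hq
  have n1 : ∀ i ≤ 2 * m, pw M s i ≠ 0 := fun i hi =>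
    pw_ne_zero M s i fun j hj => D.sadj j (by omega)
  have n2 : ∀ i ≤ 2 * l + 1, pw M t i ≠ 0 := fun i hi =>
    pw_ne_zero M t i fun j hj => D.tadj j (by omega)
  set Q := pw M t (2 * l + 1) with hQd
  have hsq : ∀ k : ℕ, ((-1 : ℂ) ^ k) * (-1) ^ k = 1 := fun k => by
    rw [← mul_pow]; simp
  let f : ℕ → ℂ := fun i => (-1) ^ (i / 2) * if i % 2 = 0 then a else pw M s 1 * b
  let g : ℕ → ℂ := fun i => (-1) ^ (i / 2) * if i % 2 = 0 then a else (-1) ^ l * Q * a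
  have hf : ∀ i, f (i + 2) = - f i := by
    intro i; simp only [f]
    rw [show (i + 2) / 2 = i / 2 + 1 by omega, show (i + 2) % 2 = i % 2 by omega]; ring
  have hg : ∀ i, g (i + 2) = - g i := by
    intro i; simp only [g]
    rw [show (i + 2) / 2 = i / 2 + 1 by omega, show (i + 2) % 2 = i % 2 by omega]; ring
  obtain ⟨h, h1, h2⟩ := D.glue (fun i => (pw M s i)⁻¹ * f i) (fun i => (pw M t i)⁻¹ * g i)
  have h0 : h (s 0) = a := by rw [h1 0 (by omega)]; simp [pw_zero, f]
  have G1 : ∀ i ≤ 2 * m, pw M s i * h (s i) = f i := by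
    intro i hi
    rcases hi.lt_or_eq with hi' | rfl
    · rw [h1 i hi', mul_inv_cancel_left₀ (n1 i hi)]
    · rw [D.sp, h0, hP]
      simp [f]
  have G2 : ∀ i ≤ 2 * l + 1, pw M t i * h (t i) = g i := by
    intro i hi
    rcases Nat.eq_zero_or_pos i with rfl | hi0
    · rw [D.t0, h0]; simp [g, pw_zero]
    rcases hi.lt_or_eq with hi' | rfl
    · rw [h2 i hi0 hi', mul_inv_cancel_left₀ (n2 i hi)]
    · rw [D.tq, h0]
      simp only [g]
      rw [show (2 * l + 1) / 2 = l by omega, show (2 * l + 1) % 2 = 1 by omega]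
      simp only [one_ne_zero, if_false]
      linear_combination (-Q * a) * hsq l
  refine ⟨h, ?_, h0, ?_⟩
  · rw [D.ker_iff]
    refine ⟨?_, ?_, ?_⟩
    · intro i hi
      rw [G1 _ (by omega), G1 _ (by omega), hf]
    · intro i hi
      rw [G2 _ (by omega), G2 _ (by omega), hg]
    · rw [G1 _ (by omega), G1 _ (by omega), G2 _ (by omega), G2 _ (by omega), hP]
      simp only [f, g]
      obtain ⟨m', rfl⟩ : ∃ k, m = k + 1 := ⟨m - 1, by omega⟩
      rw [show (2 * (m' + 1) - 1) / 2 = m' by omega, show (2 * (m' + 1) - 1) % 2 = 1 by omega,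
        show (2 * l + 1 - 1) / 2 = l by omega, show (2 * l + 1 - 1) % 2 = 0 by omega]
      have hinv : ((-1 : ℂ) ^ (m' + 1))⁻¹ = (-1) ^ (m' + 1) :=
        inv_eq_of_mul_eq_one_left (hsq _)
      rw [hinv, pow_succ]
      norm_num
      linear_combination (-(pw M s 1 * b)) * hsq m' + ((-1) ^ l * a) * hQ
  · rw [h1 1 (by omega)]
    have := n1 1 (by omega)
    simp [f]
    field_simp

theorem InfData.ker_dim {m l : ℕ} (D : InfData M.graph s t (2 * m) (2 * l + 1)) :
    (M.hRank + 2 = Fintype.card V) ↔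
      pw M s (2 * m) = (-1) ^ m ∧ pw M t (2 * l + 1) + (pw M t (2 * l + 1))⁻¹ = 0 := by
  have hp := D.hp
  have hq := D.hq
  have n1 : ∀ i ≤ 2 * m, pw M s i ≠ 0 := fun i hi =>
    pw_ne_zero M s i fun j hj => D.sadj j (by omega)
  have n2 : ∀ i ≤ 2 * l + 1, pw M t i ≠ 0 := fun i hi =>
    pw_ne_zero M t i fun j hj => D.tadj j (by omega)
  have hsq : ∀ k : ℕ, ((-1 : ℂ) ^ k) * (-1) ^ k = 1 := fun k => by
    rw [← mul_pow]; simp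
  have hneg : ∀ k : ℕ, ((-1 : ℂ) ^ k) ≠ 0 := fun k => by simp
  let L := M.hMatrix.mulVecLin
  have hrk : M.hRank + Module.finrank ℂ (LinearMap.ker L) = Fintype.card V := by
    have := L.finrank_range_add_finrank_ker
    rw [Module.finrank_fintype_fun_eq_card] at this
    exact this
  let φ : LinearMap.ker L →ₗ[ℂ] ℂ × ℂ :=
    ((LinearMap.proj (s 0)).prod (LinearMap.proj (s 1))).comp (LinearMap.ker L).subtype
  have hφ : ∀ h : LinearMap.ker L, φ h = (h.1 (s 0), h.1 (s 1)) := fun h => rfl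
  have hker : ∀ h : V → ℂ, h ∈ LinearMap.ker L ↔ M.hMatrix.mulVec h = 0 := fun h => by
    rw [LinearMap.mem_ker]; rfl
  have hinj : Function.Injective φ := by
    rw [injective_iff_map_eq_zero]
    rintro ⟨h, hh⟩ h0
    rw [hφ, Prod.mk_eq_zero] at h0
    obtain ⟨ha, hb⟩ := h0
    obtain ⟨k1, k2, k3, k4, k5⟩ := D.ker_nec h ((hker h).1 hh)
    simp only at ha hb
    rw [ha] at k2 k4 k5
    rw [hb] at k4
    have k6 : pw M t 1 * h (t 1) = 0 := by
      have : (-1 : ℂ) ^ l * (pw M t 1 * h (t 1)) = 0 := by rw [← k2, mul_zero]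
      exact (mul_eq_zero.1 this).resolve_left (hneg l)
    rw [k6] at k5
    simp only [mul_zero] at k4 k5
    ext w
    change h w = 0
    rcases D.cover w with ⟨i, hi, rfl⟩ | ⟨j, hj, hj', rfl⟩
    · have := n1 i hi.le
      rcases Nat.even_or_odd' i with ⟨k, rfl | rfl⟩
      · simpa [this] using (k4 k).1 hi.le
      · simpa [this] using (k4 k).2 hi.le
    · have := n2 j hj'.le
      rcases Nat.even_or_odd' j with ⟨k, rfl | rfl⟩
      · simpa [this] using (k5 k).1 hj'.le
      · simpa [this] using (k5 k).2 hj'.le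
  have h2 : Module.finrank ℂ (ℂ × ℂ) = 2 := by simp
  have key : M.hRank + 2 = Fintype.card V ↔ Function.Surjective φ := by
    constructor
    · intro h
      have : Module.finrank ℂ (LinearMap.ker L) = Module.finrank ℂ (ℂ × ℂ) := by omega
      exact (LinearMap.injective_iff_surjective_of_finrank_eq_finrank this).1 hinj
    · intro h
      have := (LinearEquiv.ofBijective φ ⟨hinj, h⟩).finrank_eq
      omega
  rw [key]
  constructor
  · intro hsur
    obtain ⟨⟨h, hh⟩, he⟩ := hsur (1, 0)
    rw [hφ, Prod.mk.injEq] at he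
    obtain ⟨ha, hb⟩ := he
    simp only at ha hb
    obtain ⟨k1, k2, k3, -, -⟩ := D.ker_nec h ((hker h).1 hh)
    rw [ha] at k1 k2 k3
    rw [hb] at k3
    refine ⟨by simpa using k1, ?_⟩
    have e : pw M t 1 * h (t 1) = (-1) ^ l * pw M t (2 * l + 1) := by
      linear_combination (-(pw M t 1 * h (t 1))) * hsq l - (-1) ^ l * k2
    rw [e] at k3
    apply mul_left_cancel₀ (hneg l)
    linear_combination k3
  · rintro ⟨hP, hQ⟩ ⟨a, b⟩
    obtain ⟨h, h1, h2, h3⟩ := D.ker_suff hP hQ a b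
    exact ⟨⟨h, (hker h).2 h1⟩, Prod.ext h2 h3⟩

end Core
/-! ### Walks, signatures and cycle subgraphs -/

section Walks

theorem I_zpow_cases (σ : ℤ) :
    Complex.I ^ σ = Complex.I ^ (σ % 4).toNat := by
  have h4 : Complex.I ^ (4 : ℤ) = 1 := by
    rw [show (4 : ℤ) = ((4 : ℕ) : ℤ) by rfl, zpow_natCast, Complex.I_pow_four]
  have h0 : 0 ≤ σ % 4 := Int.emod_nonneg _ (by norm_num)
  conv_lhs => rw [← Int.mul_ediv_add_emod σ 4]
  rw [zpow_add₀ Complex.I_ne_zero, zpow_mul, h4, one_zpow, one_mul]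
  conv_lhs => rw [← Int.toNat_of_nonneg h0]
  rw [zpow_natCast]

theorem I_zpow_eq_iff (σ : ℤ) (m : ℕ) :
    Complex.I ^ σ = (-1) ^ m ↔ σ.natAbs % 4 = (2 * m) % 4 := by
  rw [I_zpow_cases]
  have h4 : σ % 4 = 0 ∨ σ % 4 = 1 ∨ σ % 4 = 2 ∨ σ % 4 = 3 := by omega
  have hI1 : Complex.I ≠ 1 := fun h => by simpa using congrArg Complex.re h
  have hI2 : Complex.I ≠ -1 := fun h => by simpa using congrArg Complex.re h
  have hI3 : -Complex.I ≠ 1 := fun h => by simpa using congrArg Complex.re h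
  have hI4 : -Complex.I ≠ -1 := fun h => by simpa using congrArg Complex.re h
  have hn : (-1 : ℂ) ≠ 1 := by norm_num
  rcases Nat.even_or_odd m with hm | hm
  · rw [hm.neg_one_pow]
    obtain ⟨k, rfl⟩ := hm
    rcases h4 with h | h | h | h <;> rw [h]
    · simp; omega
    · simp [hI1]; omega
    · simp [hn]; omega
    · simp [Complex.I_pow_three, hI3]; omega
  · rw [hm.neg_one_pow]
    obtain ⟨k, rfl⟩ := hm
    rcases h4 with h | h | h | h <;> rw [h]
    · simp [hn.symm]; omega
    · simp [hI2]; omega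
    · simp; omega
    · simp [Complex.I_pow_three, hI1]; omega

theorem I_zpow_odd_iff (σ : ℤ) :
    Complex.I ^ σ + (Complex.I ^ σ)⁻¹ = 0 ↔ Odd σ.natAbs := by
  rw [I_zpow_cases, Nat.odd_iff]
  have h4 : σ % 4 = 0 ∨ σ % 4 = 1 ∨ σ % 4 = 2 ∨ σ % 4 = 3 := by omega
  rcases h4 with h | h | h | h <;> rw [h]
  · norm_num; omega
  · simp; omega
  · rw [show (2 : ℤ).toNat = 2 from rfl, Complex.I_sq]; norm_num; omega
  · simp [Complex.I_pow_three]; omega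

theorem pw_walk [Fintype V] [DecidableEq V] (M : MixedGraph V) {a b : V}
    (w : M.graph.Walk a b) :
    pw M w.getVert w.length = Complex.I ^
      ((w.darts.countP fun d => M.arc d.toProd.1 d.toProd.2 : ℤ) -
        (w.darts.countP fun d => M.arc d.toProd.2 d.toProd.1 : ℤ)) := by
  induction w with
  | nil => simp [pw]
  | @cons a b c h w ih =>
    rw [pw, SimpleGraph.Walk.length_cons, Finset.prod_range_succ']
    simp only [SimpleGraph.Walk.getVert_cons_succ, SimpleGraph.Walk.getVert_zero]
    rw [pw] at ih
    rw [ih, SimpleGraph.Walk.darts_cons, List.countP_cons, List.countP_cons]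
    have h1 := M.arc_antisymm a b
    by_cases ha : M.arc a b <;> by_cases hb : M.arc b a
    · simp_all
    · simp only [MixedGraph.hMatrix, ha, hb]
      simp only [if_true]
      push_cast
      rw [← zpow_add_one₀ Complex.I_ne_zero]
      congr 1; simp; ring
    · simp only [MixedGraph.hMatrix, ha, hb]
      simp only [if_true]
      push_cast
      rw [show -Complex.I = Complex.I⁻¹ by simp]
      rw [← zpow_sub_one₀ Complex.I_ne_zero]
      congr 1; simp; ring
    · simp [MixedGraph.hMatrix, ha, hb, h]

/-- A cycle subgraph contained in another one is equal to it. -/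
theorem cycle_le_eq [Finite V] {G : SimpleGraph V} {C D : G.Subgraph} (hC : IsCycleSubgraph C)
    (hD : IsCycleSubgraph D) (hle : D ≤ C) : D = C := by
  have hnb : ∀ v ∈ D.verts, ∀ w, C.Adj v w → D.Adj v w := by
    intro v hv w hw
    have h1 := hD.2 v hv
    have h2 := hC.2 v (hle.1 hv)
    have : {w | D.Adj v w} = {w | C.Adj v w} :=
      Set.eq_of_subset_of_ncard_le (fun w hw => hle.2 hw) (by omega) (Set.toFinite _)
    have hw' : w ∈ {w | C.Adj v w} := hw
    rw [← this] at hw'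
    exact hw'
  have hw : ∀ (a b : C.verts) (w : C.coe.Walk a b), (a : V) ∈ D.verts → (b : V) ∈ D.verts := by
    intro a b w
    induction w with
    | nil => exact id
    | cons h w ih =>
      intro ha
      exact ih (D.edge_vert (hnb _ ha _ h).symm)
  have hverts : ∀ v ∈ C.verts, v ∈ D.verts := by
    intro v hv
    obtain ⟨⟨d, hd⟩⟩ := hD.1.coe.nonempty
    obtain ⟨w⟩ := hC.1.coe.preconnected ⟨d, hle.1 hd⟩ ⟨v, hv⟩
    exact hw _ _ w hd
  apply le_antisymm hle
  exact ⟨hverts, fun v w h => hnb v (hverts _ (C.edge_vert h)) w h⟩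

theorem walk_cycle {G : SimpleGraph V} {x : V} {w : G.Walk x x} (hw : w.IsCycle) :
    IsCycleSubgraph w.toSubgraph :=
  ⟨w.toSubgraph_connected, fun _ hv =>
    hw.ncard_neighborSet_toSubgraph_eq_two (w.mem_verts_toSubgraph.1 hv)⟩

theorem exists_walk [Finite V] {G : SimpleGraph V} {C : G.Subgraph} (hC : IsCycleSubgraph C)
    {x : V} (hx : x ∈ C.verts) : ∃ w : G.Walk x x, w.IsCycle ∧ w.toSubgraph = C := by
  have hcyc : C.spanningCoe.IsCycles := by
    rintro v ⟨w, hw⟩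
    exact hC.2 v (C.edge_vert hw)
  have hne : (C.spanningCoe.neighborSet x).Nonempty := by
    apply Set.nonempty_of_ncard_ne_zero
    have := hC.2 x hx
    change {w | C.Adj x w}.ncard ≠ 0
    omega
  obtain ⟨w, hw, -⟩ := hcyc.exists_cycle_toSubgraph_verts_eq_connectedComponentSupp
    (c := C.spanningCoe.connectedComponentMk x) rfl hne
  have hw' : (w.mapLe C.spanningCoe_le).IsCycle := hw.mapLe _
  refine ⟨_, hw', cycle_le_eq hC (walk_cycle hw') ?_⟩
  have hadj : ∀ a b, (w.mapLe C.spanningCoe_le).toSubgraph.Adj a b → C.Adj a b := by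
    intro a b h
    rw [SimpleGraph.Walk.adj_toSubgraph_mapLe] at h
    exact h.adj_sub
  refine ⟨fun v hv => ?_, fun a b h => hadj a b h⟩
  have h2 := (walk_cycle hw').2 v hv
  obtain ⟨b, hb⟩ := Set.nonempty_of_ncard_ne_zero (by rw [h2]; norm_num)
  exact C.edge_vert (hadj v b hb)

theorem walkSignature_rotate [DecidableEq V] (M : MixedGraph V) {u x : V}
    (w : M.graph.Walk u u) (hx : x ∈ w.support) :
    walkSignature M (w.rotate x hx) = walkSignature M w := by
  have := (w.rotate_darts x hx).perm
  simp only [walkSignature, this.countP_eq]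

theorem cycleSig_iff [DecidableEq V] (M : MixedGraph V) (C : M.graph.Subgraph) (P : ℕ → Prop)
    {x : V} (hx : x ∈ C.verts) :
    CycleSig M C P ↔ ∃ w : M.graph.Walk x x, w.IsCycle ∧ w.toSubgraph = C ∧
      P (walkSignature M w) := by
  constructor
  · rintro ⟨u, w, hw, hv, he, hP⟩
    have hx' : x ∈ w.support := by
      rw [← hv] at hx; exact hx
    refine ⟨w.rotate x hx', hw.rotate _, ?_, by rwa [walkSignature_rotate]⟩
    rw [SimpleGraph.Walk.toSubgraph_rotate]
    ext a b
    · rw [w.mem_verts_toSubgraph, ← hv]; rfl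
    · rw [SimpleGraph.Walk.adj_toSubgraph_iff_mem_edges, ← SimpleGraph.Subgraph.mem_edgeSet, ← he]
      rfl
  · rintro ⟨w, hw, rfl, hP⟩
    refine ⟨x, w, hw, ?_, ?_, hP⟩
    · ext a; exact w.mem_verts_toSubgraph.symm
    · ext e; exact w.mem_edges_toSubgraph.symm

theorem walk_inj {G : SimpleGraph V} {x : V} {w : G.Walk x x} (hw : w.IsCycle) :
    ∀ i j, i < w.length → j < w.length → w.getVert i = w.getVert j → i = j := by
  intro i j hi hj h
  exact hw.getVert_injOn' (by simp only [Set.mem_setOf_eq]; omega)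
    (by simp only [Set.mem_setOf_eq]; omega) h

theorem walk_surj {G : SimpleGraph V} {x : V} {w : G.Walk x x} (hw : w.IsCycle) {v : V}
    (hv : v ∈ w.toSubgraph.verts) : ∃ i, i < w.length ∧ v = w.getVert i := by
  rw [w.mem_verts_toSubgraph, SimpleGraph.Walk.mem_support_iff_exists_getVert] at hv
  obtain ⟨i, hi, hl⟩ := hv
  have := hw.three_le_length
  rcases hl.lt_or_eq with h | h
  · exact ⟨i, h, hi.symm⟩
  · refine ⟨0, by omega, ?_⟩
    rw [← hi, h]; simp

theorem walk_ncard {G : SimpleGraph V} {x : V} {w : G.Walk x x} (hw : w.IsCycle) :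
    w.toSubgraph.verts.ncard = w.length := by
  have : w.toSubgraph.verts = w.getVert '' (Finset.range w.length : Set ℕ) := by
    ext v
    constructor
    · intro hv
      obtain ⟨i, hi, rfl⟩ := walk_surj hw hv
      exact ⟨i, by simpa using hi, rfl⟩
    · rintro ⟨i, -, rfl⟩
      rw [w.mem_verts_toSubgraph]; exact w.getVert_mem_support i
  rw [this, Set.ncard_image_of_injOn, Set.ncard_coe_finset, Finset.card_range]
  intro i hi j hj h
  exact walk_inj hw i j (by simpa using hi) (by simpa using hj) h

end Walks
/-! ### Coordinates on the infinity graph, its cycles and its matching number -/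

section Infinity

theorem infData_of_walks {G : SimpleGraph V} {x : V} {w₁ w₂ : G.Walk x x}
    (h₁ : w₁.IsCycle) (h₂ : w₂.IsCycle)
    (hcap : ∀ v, v ∈ w₁.toSubgraph.verts → v ∈ w₂.toSubgraph.verts → v = x)
    (hadj : ∀ a b, G.Adj a b ↔ w₁.toSubgraph.Adj a b ∨ w₂.toSubgraph.Adj a b)
    (hcov : ∀ v, v ∈ w₁.toSubgraph.verts ∨ v ∈ w₂.toSubgraph.verts) :
    InfData G w₁.getVert w₂.getVert w₁.length w₂.length := by
  have l₁ := h₁.three_le_length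
  have l₂ := h₂.three_le_length
  have m₁ : ∀ i, w₁.getVert i ∈ w₁.toSubgraph.verts := fun i =>
    w₁.mem_verts_toSubgraph.2 (w₁.getVert_mem_support i)
  have m₂ : ∀ i, w₂.getVert i ∈ w₂.toSubgraph.verts := fun i =>
    w₂.mem_verts_toSubgraph.2 (w₂.getVert_mem_support i)
  have ne₁ : ∀ i, 0 < i → i < w₁.length → w₁.getVert i ≠ x := fun i h0 hi h => by
    have := walk_inj h₁ i 0 hi (by omega) (by simpa using h)
    omega
  have ne₂ : ∀ i, 0 < i → i < w₂.length → w₂.getVert i ≠ x := fun i h0 hi h => by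
    have := walk_inj h₂ i 0 hi (by omega) (by simpa using h)
    omega
  refine ⟨l₁, l₂, by simp, by simp, by simp, walk_inj h₁, walk_inj h₂, ?_, ?_, ?_, ?_, ?_⟩
  · intro i j hi hj hj' he
    have h := hcap (w₂.getVert j) (he ▸ m₁ i) (m₂ j)
    exact ne₂ j hj hj' h
  · intro v
    by_cases hv : v ∈ w₁.toSubgraph.verts
    · exact Or.inl (walk_surj h₁ hv)
    · have hv' := (hcov v).resolve_left hv
      obtain ⟨j, hj, rfl⟩ := walk_surj h₂ hv'
      refine Or.inr ⟨j, Nat.pos_of_ne_zero ?_, hj, rfl⟩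
      rintro rfl
      apply hv
      have := m₁ 0
      simpa using this
  · intro v
    have e₁ := Set.ext_iff.1 h₁.neighborSet_toSubgraph_endpoint v
    have e₂ := Set.ext_iff.1 h₂.neighborSet_toSubgraph_endpoint v
    simp only [SimpleGraph.Subgraph.mem_neighborSet, Set.mem_insert_iff,
      Set.mem_singleton_iff] at e₁ e₂
    rw [SimpleGraph.Walk.getVert_zero, hadj, e₁, e₂, or_assoc]
  · intro i v hi
    have e := Set.ext_iff.1 (h₁.neighborSet_toSubgraph_internal (Nat.succ_ne_zero i) hi) v
    simp only [SimpleGraph.Subgraph.mem_neighborSet, Set.mem_insert_iff,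
      Set.mem_singleton_iff] at e
    rw [hadj, or_iff_left]
    · exact e
    · intro h
      exact ne₁ _ (Nat.succ_pos i) hi (hcap _ (m₁ _) (w₂.toSubgraph.edge_vert h))
  · intro i v hi
    have e := Set.ext_iff.1 (h₂.neighborSet_toSubgraph_internal (Nat.succ_ne_zero i) hi) v
    simp only [SimpleGraph.Subgraph.mem_neighborSet, Set.mem_insert_iff,
      Set.mem_singleton_iff] at e
    rw [hadj, or_iff_right]
    · exact e
    · intro h
      exact ne₂ _ (Nat.succ_pos i) hi (hcap _ (w₁.toSubgraph.edge_vert h) (m₂ _))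

/-- A cycle through an interior vertex of a cycle whose vertices other than `x` have all their
neighbours on it is that cycle. -/
theorem cycle_eq_of_mem [Finite V] {G : SimpleGraph V} {x : V} {w : G.Walk x x} (hw : w.IsCycle)
    (hadj : ∀ a b, a ∈ w.toSubgraph.verts → a ≠ x → G.Adj a b → w.toSubgraph.Adj a b)
    {C : G.Subgraph} (hC : IsCycleSubgraph C) {y : V} (hy : y ∈ w.toSubgraph.verts) (hyx : y ≠ x)
    (hyC : y ∈ C.verts) : C = w.toSubgraph := by
  have hD := walk_cycle hw
  have l := hw.three_le_length
  have m : ∀ i, w.getVert i ∈ w.toSubgraph.verts := fun i =>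
    w.mem_verts_toSubgraph.2 (w.getVert_mem_support i)
  have ne : ∀ i, 0 < i → i < w.length → w.getVert i ≠ x := fun i h0 hi h => by
    have := walk_inj hw i 0 hi (by omega) (by simpa using h)
    omega
  have hnb : ∀ a b, a ∈ w.toSubgraph.verts → a ≠ x → a ∈ C.verts →
      w.toSubgraph.Adj a b → C.Adj a b := by
    intro a b ha hax haC hab
    have h1 := hD.2 a ha
    have h2 := hC.2 a haC
    have : {w | C.Adj a w} = {b | w.toSubgraph.Adj a b} :=
      Set.eq_of_subset_of_ncard_le (fun b hb => hadj a b ha hax hb.adj_sub) (by omega)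
        (Set.toFinite _)
    have hb : b ∈ {b | w.toSubgraph.Adj a b} := hab
    rw [← this] at hb
    exact hb
  have hstep : ∀ i, i < w.length → w.toSubgraph.Adj (w.getVert i) (w.getVert (i + 1)) :=
    fun i hi => w.toSubgraph_adj_getVert hi
  obtain ⟨i, hi, rfl⟩ := walk_surj hw hy
  have hi0 : 0 < i := by
    rcases Nat.eq_zero_or_pos i with rfl | h
    · simp at hyx
    · exact h
  have up : ∀ k, i + k ≤ w.length → w.getVert (i + k) ∈ C.verts := by
    intro k
    induction k with
    | zero => intro _; exact hyC
    | succ k ih =>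
      intro hk
      have := hnb _ _ (m (i + k)) (ne _ (by omega) (by omega)) (ih (by omega))
        (hstep (i + k) (by omega))
      exact C.edge_vert this.symm
  have down : ∀ k, k ≤ i → w.getVert (i - k) ∈ C.verts := by
    intro k
    induction k with
    | zero => intro _; exact hyC
    | succ k ih =>
      intro hk
      have h1 := hstep (i - (k + 1)) (by omega)
      rw [show i - (k + 1) + 1 = i - k by omega] at h1
      have := hnb _ _ (m (i - k)) (ne _ (by omega) (by omega)) (ih (by omega)) h1.symm
      exact C.edge_vert this.symm
  have hall : ∀ v ∈ w.toSubgraph.verts, v ∈ C.verts := by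
    intro v hv
    obtain ⟨j, hj, rfl⟩ := walk_surj hw hv
    rcases le_total i j with h | h
    · have := up (j - i) (by omega)
      rwa [show i + (j - i) = j by omega] at this
    · have := down (i - j) (by omega)
      rwa [show i - (i - j) = j by omega] at this
  refine (cycle_le_eq hC hD ⟨hall, ?_⟩).symm
  intro a b hab
  have ha := w.toSubgraph.edge_vert hab
  have hb := w.toSubgraph.edge_vert hab.symm
  by_cases hax : a = x
  · have hbx : b ≠ x := fun h => hab.ne (hax.trans h.symm)
    exact (hnb b a hb hbx (hall b hb) hab.symm).symm
  · exact hnb a b ha hax (hall a ha) hab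

theorem matching_count [Fintype V] {G : SimpleGraph V} {N : G.Subgraph} (hN : N.IsMatching) :
    2 * N.edgeSet.ncard = N.verts.ncard := by
  classical
  have h1 := N.spanningCoe.sum_degrees_eq_twice_card_edges
  have h2 : N.spanningCoe.edgeFinset.card = N.edgeSet.ncard := by
    rw [← N.edgeSet_spanningCoe, ← SimpleGraph.coe_edgeFinset, Set.ncard_coe_finset]
  rw [h2] at h1
  rw [← h1]
  have h3 : ∀ v, N.spanningCoe.degree v = if v ∈ N.verts then 1 else 0 := by
    intro v
    rw [SimpleGraph.Subgraph.degree_spanningCoe]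
    split_ifs with hv
    · exact SimpleGraph.Subgraph.isMatching_iff_forall_degree.1 hN v hv
    · exact SimpleGraph.Subgraph.degree_of_notMem_verts hv
  simp only [h3]
  rw [Finset.sum_boole, ← Set.ncard_coe_finset]
  simp

theorem matchingNumber_of_perfect [Fintype V] {G : SimpleGraph V} (f : V → V)
    (hf : ∀ v, f (f v) = v) (hadj : ∀ v, G.Adj v (f v)) :
    2 * matchingNumber G = Fintype.card V := by
  let N : G.Subgraph :=
    { verts := Set.univ
      Adj := fun a b => b = f a
      adj_sub := by rintro a b rfl; exact hadj a
      edge_vert := fun _ => Set.mem_univ _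
      symm := ⟨by rintro a b rfl; exact (hf a).symm⟩ }
  have hN : N.IsMatching := fun v _ => ⟨f v, rfl, fun y hy => hy⟩
  have hc := matching_count hN
  have hu : N.verts.ncard = Fintype.card V := by
    rw [show N.verts = Set.univ from rfl, Set.ncard_univ, Nat.card_eq_fintype_card]
  have hub : ∀ k ∈ {k | ∃ N : G.Subgraph, N.IsMatching ∧ N.edgeSet.ncard = k},
      k ≤ N.edgeSet.ncard := by
    rintro k ⟨N', hN', rfl⟩
    have h1 := matching_count hN'
    have h2 : N'.verts.ncard ≤ Fintype.card V := by
      rw [← Nat.card_eq_fintype_card, ← Set.ncard_univ]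
      exact Set.ncard_le_ncard (Set.subset_univ _) (Set.toFinite _)
    omega
  have : matchingNumber G = N.edgeSet.ncard := by
    apply le_antisymm
    · exact csSup_le ⟨_, N, hN, rfl⟩ hub
    · exact le_csSup ⟨_, hub⟩ ⟨N, hN, rfl⟩
  rw [this, hc, hu]

theorem InfData.matching [Fintype V] {G : SimpleGraph V} {s t : ℕ → V} {m l : ℕ}
    (D : InfData G s t (2 * m) (2 * l + 1)) : 2 * matchingNumber G = Fintype.card V := by
  classical
  haveI : Nonempty V := ⟨s 0⟩
  obtain ⟨f, h1, h2⟩ := D.glue (fun i => if i % 2 = 0 then s (i + 1) else s (i - 1))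
    (fun j => if j % 2 = 0 then t (j - 1) else t (j + 1))
  refine matchingNumber_of_perfect f (fun v => ?_) (fun v => ?_)
  · rcases D.cover v with ⟨i, hi, rfl⟩ | ⟨j, hj, hj', rfl⟩
    · rw [h1 i hi]
      by_cases he : i % 2 = 0
      · rw [if_pos he, h1 _ (by omega), if_neg (by omega)]; rfl
      · rw [if_neg he, h1 _ (by omega), if_pos (by omega), show i - 1 + 1 = i by omega]
    · rw [h2 j hj hj']
      by_cases he : j % 2 = 0
      · rw [if_pos he, h2 _ (by omega) (by omega), if_neg (by omega), show j - 1 + 1 = j by omega]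
      · rw [if_neg he, h2 _ (by omega) (by omega), if_pos (by omega)]; rfl
  · rcases D.cover v with ⟨i, hi, rfl⟩ | ⟨j, hj, hj', rfl⟩
    · rw [h1 i hi]
      by_cases he : i % 2 = 0
      · rw [if_pos he]; exact D.sadj i hi
      · rw [if_neg he]
        have := D.sadj (i - 1) (by omega)
        rw [show i - 1 + 1 = i by omega] at this
        exact this.symm
    · rw [h2 j hj hj']
      by_cases he : j % 2 = 0
      · rw [if_pos he]
        have := D.tadj (j - 1) (by omega)
        rw [show j - 1 + 1 = j by omega] at this
        exact this.symm
      · rw [if_neg he]; exact D.tadj j hj'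

end Infinity

/-- Let G̃ be a mixed bicyclic graph with underlying graph
∞(p,1,q), p even, q odd. Then r(G̃) = 2m(G) − 2κ(G) iff the odd cycle of G̃ has odd
signature and the even cycle C̃_p satisfies σ(C̃_p) ≡ p (mod 4). -/
theorem infinity_hRank_eq_lower_bound_iff
    {V : Type u} [Fintype V] [DecidableEq V] (M : MixedGraph V) (p q : ℕ)
    (hp : Even p) (hq : Odd q) (hG : IsInfinityGraph M.graph p q) :
    (M.hRank : ℤ) =
        2 * (matchingNumber M.graph : ℤ) - 2 * (evenCycleCount M.graph : ℤ) ↔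
      (OddCyclesSig M Odd ∧ EvenCyclesSig M (fun n s => s % 4 = n % 4)) := by
  obtain ⟨C₁, C₂, hC₁, hC₂, hn₁, hn₂, hcap, hsup⟩ := hG
  obtain ⟨x, hx⟩ := Set.ncard_eq_one.1 hcap
  have hxm : x ∈ C₁.verts ∩ C₂.verts := by rw [hx]; rfl
  have hcap' : ∀ v, v ∈ C₁.verts → v ∈ C₂.verts → v = x := by
    intro v h1 h2
    have : v ∈ C₁.verts ∩ C₂.verts := ⟨h1, h2⟩
    rw [hx] at this
    exact this
  have hcov : ∀ v, v ∈ C₁.verts ∨ v ∈ C₂.verts := by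
    intro v
    have : v ∈ (C₁ ⊔ C₂).verts := by rw [hsup]; trivial
    exact this
  have hadj : ∀ a b, M.graph.Adj a b ↔ C₁.Adj a b ∨ C₂.Adj a b := by
    intro a b
    have : (C₁ ⊔ C₂).Adj a b ↔ M.graph.Adj a b := by rw [hsup]; rfl
    rw [← this]; rfl
  -- the rank statement, for every choice of traversals
  have main : ∀ w₁ w₂ : M.graph.Walk x x, w₁.IsCycle → w₂.IsCycle → w₁.toSubgraph = C₁ →
      w₂.toSubgraph = C₂ → (2 * matchingNumber M.graph = Fintype.card V ∧
        (M.hRank + 2 = Fintype.card V ↔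
          (walkSignature M w₁ % 4 = p % 4 ∧ Odd (walkSignature M w₂)))) := by
    rintro w₁ w₂ h₁ h₂ rfl rfl
    have D := infData_of_walks h₁ h₂ hcap' hadj hcov
    rw [walk_ncard h₁] at hn₁
    rw [walk_ncard h₂] at hn₂
    obtain ⟨m, hm⟩ := hp.two_dvd
    obtain ⟨l, hl⟩ := hq
    have e₁ := pw_walk M w₁
    have e₂ := pw_walk M w₂
    rw [hn₁, hm] at D e₁
    rw [hn₂, hl] at D e₂
    refine ⟨D.matching, ?_⟩
    rw [D.ker_dim, e₁, e₂, I_zpow_eq_iff, I_zpow_odd_iff, hm]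
    rfl
  obtain ⟨v₁, hv₁, hw₁⟩ := exists_walk hC₁ hxm.1
  obtain ⟨v₂, hv₂, hw₂⟩ := exists_walk hC₂ hxm.2
  -- the graph has no other cycles
  have huniq : ∀ C : M.graph.Subgraph, IsCycleSubgraph C → C = C₁ ∨ C = C₂ := by
    intro C hC
    have hne : ∃ y ∈ C.verts, y ≠ x := by
      obtain ⟨⟨y, hy⟩⟩ := hC.1.coe.nonempty
      by_cases hyx : y = x
      · have h2 := hC.2 y hy
        obtain ⟨b, hb⟩ := Set.nonempty_of_ncard_ne_zero (by rw [h2]; norm_num)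
        have hb' : C.Adj y b := hb
        exact ⟨b, C.edge_vert hb'.symm, fun h => hb'.ne (hyx.trans h.symm)⟩
      · exact ⟨y, hy, hyx⟩
    obtain ⟨y, hy, hyx⟩ := hne
    rcases hcov y with h | h
    · left
      rw [← hw₁] at h ⊢
      refine cycle_eq_of_mem hv₁ ?_ hC h hyx hy
      intro a b ha hax hab
      rw [hw₁] at ha ⊢
      exact ((hadj a b).1 hab).resolve_right fun h' => hax (hcap' a ha (C₂.edge_vert h'))
    · right
      rw [← hw₂] at h ⊢
      refine cycle_eq_of_mem hv₂ ?_ hC h hyx hy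
      intro a b ha hax hab
      rw [hw₂] at ha ⊢
      exact ((hadj a b).1 hab).resolve_left fun h' => hax (hcap' a (C₁.edge_vert h') ha)
  have hκ : evenCycleCount M.graph = 1 := by
    rw [evenCycleCount, Set.ncard_eq_one]
    refine ⟨C₁, Set.eq_singleton_iff_unique_mem.2 ⟨⟨hC₁, by rwa [hn₁]⟩, ?_⟩⟩
    rintro C ⟨hC, he⟩
    rcases huniq C hC with h | h
    · exact h
    · rw [h, hn₂] at he
      exact absurd hq (Nat.not_odd_iff_even.2 he)
  have hm := (main v₁ v₂ hv₁ hv₂ hw₁ hw₂).1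
  have hL : ((M.hRank : ℤ) =
        2 * (matchingNumber M.graph : ℤ) - 2 * (evenCycleCount M.graph : ℤ)) ↔
      M.hRank + 2 = Fintype.card V := by
    rw [hκ]; omega
  rw [hL]
  constructor
  · intro hr
    obtain ⟨h1, h2⟩ := (main v₁ v₂ hv₁ hv₂ hw₁ hw₂).2.1 hr
    constructor
    · intro C hC ho
      rcases huniq C hC with rfl | rfl
      · rw [hn₁] at ho
        exact absurd ho (Nat.not_odd_iff_even.2 hp)
      · exact (cycleSig_iff M _ _ hxm.2).2 ⟨v₂, hv₂, hw₂, h2⟩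
    · intro C hC he
      rcases huniq C hC with rfl | rfl
      · exact (cycleSig_iff M _ _ hxm.1).2 ⟨v₁, hv₁, hw₁, by rw [hn₁]; exact h1⟩
      · rw [hn₂] at he
        exact absurd hq (Nat.not_odd_iff_even.2 he)
  · rintro ⟨hodd, heven⟩
    obtain ⟨u₁, hu₁, hs₁, h1⟩ :=
      (cycleSig_iff M _ _ hxm.1).1 (heven C₁ hC₁ (by rwa [hn₁]))
    obtain ⟨u₂, hu₂, hs₂, h2⟩ :=
      (cycleSig_iff M _ _ hxm.2).1 (hodd C₂ hC₂ (by rwa [hn₂]))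
    exact (main u₁ u₂ hu₁ hu₂ hs₁ hs₂).2.2 ⟨by rwa [hn₁] at h1, h2⟩

end MixedPaper
end
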